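/- arXiv:1806.04369 — 3 statements merged into one kernel-verified Lean document; each statement's English description precedes it below -/
import Mathlib

section
/- Let p be an odd prime and let d, e, f be positive integers with d ≤ e, f ≤ e and e ≤ d + f. Then the order of the automorphism group of M₁(p,d,e,f) is: p^{4e−3}(p²−1)(p−1) if f = e = d; p^{2(e+f)−1}(p−1) if f < e = d; p^{3d+e−2}(p−1)² if d < f = e; p^{3d+f−1}(p−1) if d ≤ f < e; and p^{2(d+f)−1}(p−1) if f < d < e. -/
/-- Relators for the group `M₁(p,d,e,f) = ⟨a, b ∣ a^(p^e) = b^(p^d) = 1, b⁻¹ab = a^(1+p^f)⟩`,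
where `a` is generator `0` and `b` is generator `1`. -/
def M1rels (p d e f : ℕ) : Set (FreeGroup (Fin 2)) :=
  {FreeGroup.of 0 ^ p ^ e, FreeGroup.of 1 ^ p ^ d,
    (FreeGroup.of 1)⁻¹ * FreeGroup.of 0 * FreeGroup.of 1 * (FreeGroup.of 0 ^ (1 + p ^ f))⁻¹}

/-- The metacyclic group `M₁(p,d,e,f) = ⟨a, b ∣ a^(p^e) = b^(p^d) = 1, b⁻¹ab = a^(1+p^f)⟩`. -/
abbrev M1 (p d e f : ℕ) : Type := PresentedGroup (M1rels p d e f)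

/-- The canonical generator `a` of `M₁(p,d,e,f)`. -/
def M1a (p d e f : ℕ) : M1 p d e f := PresentedGroup.of 0

/-- The canonical generator `b` of `M₁(p,d,e,f)`. -/
def M1b (p d e f : ℕ) : M1 p d e f := PresentedGroup.of 1

/-- Relators for the group `M₂(p,d,e,f) = ⟨a, b ∣ a^(p^d) = b^(p^e) = 1, b⁻¹ab = a^(1+p^f)⟩`,
where `a` is generator `0` and `b` is generator `1`. -/
def M2rels (p d e f : ℕ) : Set (FreeGroup (Fin 2)) :=
  {FreeGroup.of 0 ^ p ^ d, FreeGroup.of 1 ^ p ^ e,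
    (FreeGroup.of 1)⁻¹ * FreeGroup.of 0 * FreeGroup.of 1 * (FreeGroup.of 0 ^ (1 + p ^ f))⁻¹}

/-- The metacyclic group `M₂(p,d,e,f) = ⟨a, b ∣ a^(p^d) = b^(p^e) = 1, b⁻¹ab = a^(1+p^f)⟩`. -/
abbrev M2 (p d e f : ℕ) : Type := PresentedGroup (M2rels p d e f)

/-- The canonical generator `a` of `M₂(p,d,e,f)`. -/
def M2a (p d e f : ℕ) : M2 p d e f := PresentedGroup.of 0

/-- The canonical generator `b` of `M₂(p,d,e,f)`. -/
def M2b (p d e f : ℕ) : M2 p d e f := PresentedGroup.of 1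

/-- Relators for the group
`M₃(p,d,e,h,f) = ⟨a, b ∣ a^(p^h) = 1, b^(p^(d+e-h)) = a^(p^d), b⁻¹ab = a^(1+p^f)⟩`,
where `a` is generator `0` and `b` is generator `1`. -/
def M3rels (p d e h f : ℕ) : Set (FreeGroup (Fin 2)) :=
  {FreeGroup.of 0 ^ p ^ h, FreeGroup.of 1 ^ p ^ (d + e - h) * (FreeGroup.of 0 ^ p ^ d)⁻¹,
    (FreeGroup.of 1)⁻¹ * FreeGroup.of 0 * FreeGroup.of 1 * (FreeGroup.of 0 ^ (1 + p ^ f))⁻¹}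

/-- The non-split metacyclic group
`M₃(p,d,e,h,f) = ⟨a, b ∣ a^(p^h) = 1, b^(p^(d+e-h)) = a^(p^d), b⁻¹ab = a^(1+p^f)⟩`. -/
abbrev M3 (p d e h f : ℕ) : Type := PresentedGroup (M3rels p d e h f)

/-- The canonical generator `a` of `M₃(p,d,e,h,f)`. -/
def M3a (p d e h f : ℕ) : M3 p d e h f := PresentedGroup.of 0

/-- The canonical generator `b` of `M₃(p,d,e,h,f)`. -/
def M3b (p d e h f : ℕ) : M3 p d e h f := PresentedGroup.of 1

/-- `(α, β)` is an exact `(m,n)`-bicyclic pair of `G`: `α` has order `m`, `β` has order `n`,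
`⟨α⟩ ∩ ⟨β⟩ = 1`, and `G = ⟨α⟩⟨β⟩`. -/
def IsExactBicyclicPair {G : Type*} [Group G] (m n : ℕ) (α β : G) : Prop :=
  orderOf α = m ∧ orderOf β = n ∧
    Subgroup.zpowers α ⊓ Subgroup.zpowers β = ⊥ ∧
    ∀ g : G, ∃ i j : ℤ, g = α ^ i * β ^ j

/-!
The group `M₁(p,d,e,f)` is the semidirect product of `ZMod (p ^ e)` by `ZMod (p ^ d)` in which the
second factor acts through a character `χ` with values in the units congruent to `1` modulo `p ^ f`.
An automorphism is the same thing as a pair `(i, j)`, `(k, l)` of elements which satisfies the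
defining relations and generates the group. In a `p`-group a set generates as soon as no nontrivial
homomorphism to `ZMod p` kills it, and here such homomorphisms are linear forms in the coordinates
modulo `p`, so generation means that the `2 × 2` matrix with rows `(i, j)`, `(k, l)` is invertible
modulo `p`. Since `p` is odd, `∑ m < p ^ r, u ^ m` is `p ^ r` times a unit for every `u ≡ 1` modulo
`p`; this turns the relations into `p ^ f * j = 0`, `p ^ d * k = 0` and
`χ l * (∑ m < 1 + p ^ f, χ j ^ m) * i = i`. If `f < e`, then `i` must be a unit, the first two
equations can be solved independently of it, and each `j` leaves a coset of `ker χ` for `l`. If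
`f = e`, then `χ = 1` and only the determinant and the equation for `k` remain.
-/

section GeomSum

variable {R : Type*} [CommRing R]

theorem geom_sum_range_mul (u : R) (m n : ℕ) :
    ∑ i ∈ Finset.range (m * n), u ^ i =
      (∑ i ∈ Finset.range m, u ^ i) * ∑ i ∈ Finset.range n, (u ^ m) ^ i := by
  induction n with
  | zero => simp
  | succ n ih =>
    rw [Nat.mul_succ, Finset.sum_range_add, ih, Finset.sum_range_succ _ n, mul_add, ← pow_mul]
    congr 1
    simp only [Finset.sum_mul, pow_add, mul_comm]

theorem exists_geom_sum_prime_pow_eq {p : ℕ} (hp : Odd p) {u : R} (hu : (p : R) ∣ u - 1) (r : ℕ) :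
    ∃ c : R, ∑ i ∈ Finset.range (p ^ r), u ^ i = p ^ r * (1 + p * c) := by
  induction r with
  | zero => exact ⟨0, by simp⟩
  | succ r ih =>
    obtain ⟨c, hc⟩ := ih
    obtain ⟨b, hb⟩ : (p : R) ∣ u ^ p ^ r - 1 := hu.trans (sub_one_dvd_pow_sub_one u _)
    obtain ⟨c', hc'⟩ := odd_sq_dvd_geom_sum₂_sub (1 : R) b hp
    have hsum : ∑ i ∈ Finset.range p, (u ^ p ^ r) ^ i = p * (1 + p * c') := by
      rw [sub_eq_iff_eq_add'.1 hb]
      simp only [one_pow, mul_one] at hc'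
      linear_combination hc'
    rw [pow_succ, geom_sum_range_mul, hc, hsum]
    exact ⟨c + c' + p * c * c', by ring⟩

theorem prime_pow_add_dvd_pow_prime_pow_sub_one {p f : ℕ} (hp : Odd p) (hf : f ≠ 0) {u : R}
    (hu : (p : R) ^ f ∣ u - 1) (r : ℕ) : (p : R) ^ (f + r) ∣ u ^ p ^ r - 1 := by
  obtain ⟨c, hc⟩ := exists_geom_sum_prime_pow_eq hp ((dvd_pow_self _ hf).trans hu) r
  rw [← mul_geom_sum, hc, pow_add]
  exact mul_dvd_mul hu (dvd_mul_right _ _)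

end GeomSum

section Counting

theorem natCard_subtype_comp_of_surjective {A B : Type*} [AddGroup A] [AddGroup B]
    {φ : A →+ B} (hφ : Function.Surjective φ) (P : B → Prop) :
    Nat.card {a // P (φ a)} = Nat.card {b // P b} * Nat.card φ.ker := by
  rw [← Nat.card_congr (Equiv.sigmaSubtypeFiberEquivSubtype φ fun _ ↦ Iff.rfl), ← Nat.card_prod]
  exact Nat.card_congr ((Equiv.sigmaCongrRight fun b : {b // P b} ↦
    φ.fiberEquivKerOfSurjective hφ b).trans (Equiv.sigmaEquivProd _ _))

theorem natCard_eq_mul_natCard_ker {A B : Type*} [AddGroup A] [AddGroup B]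
    {φ : A →+ B} (hφ : Function.Surjective φ) : Nat.card A = Nat.card B * Nat.card φ.ker := by
  rw [← φ.ker.card_mul_index, AddSubgroup.index_ker, AddMonoidHom.range_eq_top.2 hφ,
    AddSubgroup.card_top, mul_comm]

theorem natCard_isUnit (M : Type*) [Monoid M] : Nat.card {a : M // IsUnit a} = Nat.card Mˣ :=
  Nat.card_congr Submonoid.unitsTypeEquivIsUnitSubmonoid.toEquiv.symm

theorem natCard_matrix_det_ne_zero (n : ℕ) (K : Type*) [Field K] [Fintype K] :
    Nat.card {M : Matrix (Fin n) (Fin n) K // M.det ≠ 0} =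
      ∏ i : Fin n, (Fintype.card K ^ n - Fintype.card K ^ (i : ℕ)) := by
  rw [← Matrix.card_GL_field, ← natCard_isUnit]
  simp only [Matrix.isUnit_iff_isUnit_det, isUnit_iff_ne_zero]

theorem natCard_matrix (m n : ℕ) (R : Type*) :
    Nat.card (Matrix (Fin m) (Fin n) R) = Nat.card R ^ (n * m) := by
  simp [Matrix, Nat.card_fun, pow_mul]

theorem natCard_map_det_ne_zero (n : ℕ) {R K : Type*} [Ring R] [Field K] [Fintype K] {φ : R →+* K}
    (hφ : Function.Surjective φ) :
    Nat.card {M : Matrix (Fin n) (Fin n) R // (M.map φ).det ≠ 0} =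
      (∏ i : Fin n, (Fintype.card K ^ n - Fintype.card K ^ (i : ℕ))) *
        Nat.card (φ : R →+ K).ker ^ (n * n) := by
  let Φ : Matrix (Fin n) (Fin n) R →+ Matrix (Fin n) (Fin n) K := (φ : R →+ K).mapMatrix
  have hΦ : Function.Surjective Φ := fun M ↦
    ⟨M.map (Function.surjInv hφ), Matrix.ext fun i j ↦ Function.surjInv_eq hφ (M i j)⟩
  have hker : Nat.card Φ.ker = Nat.card (φ : R →+ K).ker ^ (n * n) := by
    have hR : Nat.card R = Nat.card K * Nat.card (φ : R →+ K).ker := natCard_eq_mul_natCard_ker hφ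
    have hmat := natCard_eq_mul_natCard_ker hΦ
    rw [natCard_matrix, natCard_matrix, hR, mul_pow] at hmat
    exact (Nat.eq_of_mul_eq_mul_left (pow_pos Nat.card_pos _) hmat).symm
  rw [← hker, ← natCard_matrix_det_ne_zero]
  exact natCard_subtype_comp_of_surjective hΦ fun M ↦ M.det ≠ 0

end Counting

section PresentedGroup

variable {α G : Type*} [Group G] {rels : Set (FreeGroup α)}

theorem lift_comp_presentedGroup_of (θ : PresentedGroup rels →* G) (w : FreeGroup α) :
    FreeGroup.lift (fun i ↦ θ (.of i)) w = θ (PresentedGroup.mk rels w) := by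
  rw [← MonoidHom.comp_apply]
  exact DFunLike.congr_fun (FreeGroup.ext_hom _ _ fun i ↦ by simp [PresentedGroup.of]) w

theorem natCard_mulAut_presentedGroup [Finite G] (ψ : PresentedGroup rels ≃* G) :
    Nat.card (MulAut (PresentedGroup rels)) = Nat.card {v : α → G //
      (∀ r ∈ rels, FreeGroup.lift v r = 1) ∧ Subgroup.closure (Set.range v) = ⊤} := by
  have : Finite (PresentedGroup rels) := .of_equiv G ψ.symm
  let images (φ : MulAut (PresentedGroup rels)) : α → G := fun i ↦ ψ (φ (.of i))
  have images_rels (φ) : ∀ r ∈ rels, FreeGroup.lift (images φ) r = 1 := fun r hr ↦ by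
    have := lift_comp_presentedGroup_of (φ.trans ψ).toMonoidHom r
    rwa [PresentedGroup.one_of_mem hr, map_one] at this
  have images_closure (φ) : Subgroup.closure (Set.range (images φ)) = ⊤ := by
    have := MonoidHom.map_closure (φ.trans ψ).toMonoidHom
      (Set.range (PresentedGroup.of : α → PresentedGroup rels))
    rw [PresentedGroup.closure_range_of, ← Set.range_comp,
      Subgroup.map_top_of_surjective _ (φ.trans ψ).surjective] at this
    exact this.symm
  refine Nat.card_congr (.ofBijective
    (fun φ ↦ ⟨images φ, images_rels φ, images_closure φ⟩) ⟨fun φ φ' h ↦ ?_, ?_⟩)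
  · refine MulEquiv.toMonoidHom_injective (PresentedGroup.ext fun i ↦ ψ.injective ?_)
    exact congrFun (congrArg Subtype.val h) i
  · rintro ⟨v, hrels, hclosure⟩
    let θ : PresentedGroup rels →* G := PresentedGroup.toGroup hrels
    have hθ (i) : θ (.of i) = v i := PresentedGroup.toGroup.of hrels
    have hsurj : Function.Surjective θ := by
      rw [← MonoidHom.range_eq_top, eq_top_iff, ← hclosure, Subgroup.closure_le]
      rintro _ ⟨i, rfl⟩
      exact ⟨.of i, hθ i⟩
    have hbij : Function.Bijective (ψ.symm.toMonoidHom.comp θ) :=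
      Finite.surjective_iff_bijective.1 (ψ.symm.surjective.comp hsurj)
    exact ⟨.ofBijective _ hbij, Subtype.ext (funext fun i ↦ by simp [images, hθ])⟩

end PresentedGroup

section PGroup

variable {p : ℕ} [Fact p.Prime] {G : Type*} [Group G] [Finite G]

theorem exists_hom_zmod_ne_one_of_ne_top (hG : IsPGroup p G) {H : Subgroup G} (hH : H ≠ ⊤) :
    ∃ χ : G →* Multiplicative (ZMod p), χ ≠ 1 ∧ H ≤ χ.ker := by
  obtain ⟨n, hn⟩ := hG.exists_card_eq
  obtain ⟨m, hm⟩ := (hG.to_subgroup H).exists_card_eq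
  have hp : p.Prime := Fact.out
  have hmn : m < n := by
    rw [← Nat.pow_lt_pow_iff_right hp.one_lt, ← hm, ← hn]
    exact (Subgroup.card_le_card_group H).lt_of_ne fun h ↦ hH (H.eq_top_of_card_eq h)
  obtain ⟨k, rfl⟩ : ∃ k, n = k + 1 := ⟨n - 1, by lia⟩
  obtain ⟨K, hK, hHK⟩ := Sylow.exists_subgroup_card_pow_prime_le p
    (hn ▸ pow_dvd_pow p k.le_succ) H hm (Nat.le_of_lt_succ hmn)
  have hindex : K.index = p := by
    have := K.card_mul_index
    rw [hK, hn, pow_succ] at this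
    exact Nat.eq_of_mul_eq_mul_left (pow_pos hp.pos k) this
  have : K.Normal := Subgroup.normal_of_index_eq_minFac_card <| by
    rw [hindex, hn, hp.pow_minFac k.succ_ne_zero]
  let e : G ⧸ K ≃* Multiplicative (ZMod p) :=
    mulEquivOfPrimeCardEq (p := p) (by rw [← Subgroup.index_eq_card, hindex]) (by simp)
  have hker : ((e : G ⧸ K →* Multiplicative (ZMod p)).comp (QuotientGroup.mk' K)).ker = K := by
    rw [MonoidHom.ker_mulEquiv_comp, QuotientGroup.ker_mk']
  refine ⟨(e : G ⧸ K →* _).comp (QuotientGroup.mk' K), fun h ↦ ?_, hker.symm ▸ hHK⟩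
  rw [h, MonoidHom.ker_one] at hker
  rw [← hker, Subgroup.index_top] at hindex
  exact hp.one_lt.ne hindex

theorem closure_eq_top_iff_forall_hom_zmod (hG : IsPGroup p G) (S : Set G) :
    Subgroup.closure S = ⊤ ↔
      ∀ χ : G →* Multiplicative (ZMod p), (∀ s ∈ S, χ s = 1) → χ = 1 := by
  refine ⟨fun h χ hχ ↦ ?_, fun h ↦ ?_⟩
  · rw [← MonoidHom.ker_eq_top_iff, eq_top_iff, ← h, Subgroup.closure_le]
    exact hχ
  · by_contra hne
    obtain ⟨χ, hχ, hle⟩ := exists_hom_zmod_ne_one_of_ne_top hG hne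
    exact hχ (h χ fun s hs ↦ hle (Subgroup.subset_closure hs))

end PGroup

section ZModPrimePow

open Multiplicative

theorem hom_apply_ofAdd_natCast {n : ℕ} {K : Type*} [Group K] (φ : Multiplicative (ZMod n) →* K)
    (m : ℕ) : φ (ofAdd (m : ZMod n)) = φ (ofAdd 1) ^ m := by
  rw [← map_pow, ← ofAdd_nsmul, nsmul_one]

theorem exists_hom_zmod_apply_ofAdd_one_eq {n : ℕ} {K : Type*} [Group K] {x : K} (hx : x ^ n = 1) :
    ∃ φ : Multiplicative (ZMod n) →* K, φ (ofAdd 1) = x := by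
  refine ⟨AddMonoidHom.toMultiplicativeLeft
    (ZMod.lift n ⟨zmultiplesHom _ (Additive.ofMul x), ?_⟩), ?_⟩
  · simp [← ofMul_pow, hx]
  · have := ZMod.lift_coe n ⟨zmultiplesHom _ (Additive.ofMul x), by simp [← ofMul_pow, hx]⟩ 1
    simpa using congrArg Additive.toMul this

theorem hom_zmod_ext {n : ℕ} [NeZero n] {K : Type*} [Group K]
    {φ φ' : Multiplicative (ZMod n) →* K} (h : φ (ofAdd 1) = φ' (ofAdd 1)) : φ = φ' := by
  refine MonoidHom.ext fun z ↦ ?_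
  obtain ⟨m, hm⟩ := ZMod.natCast_zmod_surjective z.toAdd
  rw [← ofAdd_toAdd z, ← hm, hom_apply_ofAdd_natCast, hom_apply_ofAdd_natCast, h]

theorem castHom_eq_zero_iff {m n : ℕ} [NeZero n] (h : m ∣ n) (z : ZMod n) :
    ZMod.castHom h (ZMod m) z = 0 ↔ (m : ZMod n) ∣ z := by
  constructor
  · intro hz
    obtain ⟨k, rfl⟩ := ZMod.natCast_zmod_surjective z
    rw [map_natCast, ZMod.natCast_eq_zero_iff] at hz
    exact Nat.cast_dvd_cast hz
  · rintro ⟨c, rfl⟩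
    rw [map_mul, map_natCast, ZMod.natCast_self, zero_mul]

theorem natCast_prime_pow_eq_zero_of_le (p : ℕ) {n s : ℕ} (h : n ≤ s) :
    (p : ZMod (p ^ n)) ^ s = 0 :=
  pow_eq_zero_of_le h (by rw [← Nat.cast_pow, ZMod.natCast_self])

theorem isUnit_of_prime_dvd_sub_one {p n : ℕ} {u : ZMod (p ^ n)}
    (hu : (p : ZMod (p ^ n)) ∣ u - 1) : IsUnit u := by
  obtain ⟨c, hc⟩ := hu
  have : IsNilpotent (p * c : ZMod (p ^ n)) :=
    ⟨n, by rw [mul_pow, natCast_prime_pow_eq_zero_of_le p le_rfl, zero_mul]⟩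
  rw [← sub_add_cancel u 1, hc]
  exact this.isUnit_add_one

variable {p : ℕ} [Fact p.Prime]

theorem prime_pow_mul_eq_zero_iff {n : ℕ} (s : ℕ) (z : ZMod (p ^ n)) :
    (p : ZMod (p ^ n)) ^ s * z = 0 ↔ (p : ZMod (p ^ n)) ^ (n - s) ∣ z := by
  constructor
  · intro h
    obtain ⟨m, rfl⟩ := ZMod.natCast_zmod_surjective z
    norm_cast at h ⊢
    refine Nat.cast_dvd_cast ?_
    rw [ZMod.natCast_eq_zero_iff] at h
    rcases le_total n s with hs | hs
    · simp [Nat.sub_eq_zero_of_le hs]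
    · rw [← Nat.add_sub_cancel' hs, pow_add] at h
      simpa using Nat.dvd_of_mul_dvd_mul_left (pow_pos (Fact.out : p.Prime).pos s) h
  · rintro ⟨c, rfl⟩
    rw [← mul_assoc, ← pow_add, natCast_prime_pow_eq_zero_of_le p (by lia), zero_mul]

theorem natCard_prime_pow_mul_eq_zero (n s : ℕ) :
    Nat.card {z : ZMod (p ^ n) // (p : ZMod (p ^ n)) ^ s * z = 0} = p ^ min n s := by
  have hker := IsAddCyclic.card_nsmulAddMonoidHom_ker (ZMod (p ^ n)) (p ^ s)
  have hgcd : (p ^ n).gcd (p ^ s) = p ^ min n s := by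
    rcases le_total n s with hs | hs
    · rw [min_eq_left hs, Nat.gcd_eq_left (pow_dvd_pow p hs)]
    · rw [min_eq_right hs, Nat.gcd_eq_right (pow_dvd_pow p hs)]
  rw [Nat.card_zmod, hgcd] at hker
  rw [← hker]
  refine Nat.card_congr (Equiv.subtypeEquivRight fun z ↦ ?_)
  rw [AddMonoidHom.mem_ker, nsmulAddMonoidHom_apply, nsmul_eq_mul, Nat.cast_pow]

/-- Reduction modulo `p` on `ZMod (p ^ n)`. -/
def primeResidue (p n : ℕ) [NeZero n] : ZMod (p ^ n) →+* ZMod p :=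
  ZMod.castHom (dvd_pow_self p (NeZero.ne n)) _

theorem primeResidue_surjective (p n : ℕ) [NeZero n] : Function.Surjective (primeResidue p n) :=
  ZMod.castHom_surjective _

theorem toAdd_hom_apply_ofAdd {n : ℕ} [NeZero n]
    (φ : Multiplicative (ZMod (p ^ n)) →* Multiplicative (ZMod p)) (z : ZMod (p ^ n)) :
    (φ (ofAdd z)).toAdd = (φ (ofAdd 1)).toAdd * primeResidue p n z := by
  obtain ⟨m, rfl⟩ := ZMod.natCast_zmod_surjective z
  rw [hom_apply_ofAdd_natCast, toAdd_pow, nsmul_eq_mul, map_natCast, mul_comm]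

variable {n : ℕ} [NeZero n]

theorem primeResidue_eq_zero_iff (z : ZMod (p ^ n)) :
    primeResidue p n z = 0 ↔ (p : ZMod (p ^ n)) ∣ z :=
  castHom_eq_zero_iff _ z

theorem primeResidue_eq_one_iff (z : ZMod (p ^ n)) :
    primeResidue p n z = 1 ↔ (p : ZMod (p ^ n)) ∣ z - 1 := by
  rw [← primeResidue_eq_zero_iff, map_sub, map_one, sub_eq_zero]

theorem primeResidue_ne_zero_iff_isUnit (z : ZMod (p ^ n)) :
    primeResidue p n z ≠ 0 ↔ IsUnit z := by
  refine ⟨fun h ↦ ?_, fun h ↦ (h.map _).ne_zero⟩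
  obtain ⟨w, hw⟩ := primeResidue_surjective p n (primeResidue p n z)⁻¹
  refine isUnit_of_mul_isUnit_left (y := w) (isUnit_of_prime_dvd_sub_one ?_)
  rw [← primeResidue_eq_one_iff, map_mul, hw, mul_inv_cancel₀ h]

theorem primeResidue_eq_zero_of_prime_pow_mul {s : ℕ} (hs : s < n) {z : ZMod (p ^ n)}
    (h : (p : ZMod (p ^ n)) ^ s * z = 0) : primeResidue p n z = 0 := by
  rw [prime_pow_mul_eq_zero_iff] at h
  exact (primeResidue_eq_zero_iff z).2 ((dvd_pow_self _ (by lia)).trans h)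

theorem natCard_ker_primeResidue (p n : ℕ) [Fact p.Prime] [NeZero n] :
    Nat.card (primeResidue p n : ZMod (p ^ n) →+ ZMod p).ker = p ^ (n - 1) := by
  have hcard := natCard_eq_mul_natCard_ker (φ := (primeResidue p n : ZMod (p ^ n) →+ ZMod p))
    (primeResidue_surjective p n)
  rw [Nat.card_zmod, Nat.card_zmod] at hcard
  refine Nat.eq_of_mul_eq_mul_left (Fact.out : p.Prime).pos ?_
  rw [← hcard, mul_pow_sub_one (NeZero.ne n)]

theorem natCard_isUnit_zmod_prime_pow (p n : ℕ) [Fact p.Prime] [NeZero n] :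
    Nat.card {z : ZMod (p ^ n) // IsUnit z} = p ^ (n - 1) * (p - 1) := by
  rw [natCard_isUnit, Nat.card_eq_fintype_card, ZMod.card_units_eq_totient,
    Nat.totient_prime_pow Fact.out (NeZero.pos n)]

end ZModPrimePow

section AffineProduct

open Multiplicative

/-- The action of a group `A`, written additively, on the additive group of a ring `R` through a
character `χ` of `A` with values in the units of `R`. -/
def unitAction {A R : Type*} [AddGroup A] [CommRing R] (χ : Multiplicative A →* Rˣ) :
    Multiplicative A →* MulAut (Multiplicative R) :=
  (MulAutMultiplicative R).symm.toMonoidHom.comp (AddAut.mulLeft.comp χ)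

/-- The semidirect product `R ⋊ A` of additive groups in which `A` acts on the ring `R` by
multiplication through `χ`. -/
abbrev AffineProduct {A R : Type*} [AddGroup A] [CommRing R] (χ : Multiplicative A →* Rˣ) :
    Type _ :=
  Multiplicative R ⋊[unitAction χ] Multiplicative A

section General

variable {A R : Type*} [AddGroup A] [CommRing R] {χ : Multiplicative A →* Rˣ}

theorem toAdd_unitAction_apply (g : Multiplicative A) (z : Multiplicative R) :
    (unitAction χ g z).toAdd = χ g * z.toAdd := rfl

theorem AffineProduct.toAdd_mul_left (x y : AffineProduct χ) :
    (x * y).left.toAdd = x.left.toAdd + χ x.right * y.left.toAdd := rfl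

theorem AffineProduct.pow_right (x : AffineProduct χ) (n : ℕ) : (x ^ n).right = x.right ^ n :=
  map_pow SemidirectProduct.rightHom x n

theorem AffineProduct.toAdd_pow_left (x : AffineProduct χ) (n : ℕ) :
    (x ^ n).left.toAdd = (∑ m ∈ Finset.range n, (χ x.right : R) ^ m) * x.left.toAdd := by
  induction n with
  | zero => simp
  | succ n ih =>
    rw [pow_succ, toAdd_mul_left, ih, pow_right, map_pow, Units.val_pow_eq_pow_val,
      Finset.sum_range_succ, add_mul]

instance [Finite A] [Finite R] (χ : Multiplicative A →* Rˣ) : Finite (AffineProduct χ) :=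
  .of_equiv _ SemidirectProduct.equivProd.symm

theorem affineProduct_ext_iff {x y : AffineProduct χ} :
    x = y ↔ x.right = y.right ∧ x.left.toAdd = y.left.toAdd := by
  rw [SemidirectProduct.ext_iff, and_comm, toAdd.injective.eq_iff]

end General

theorem isPGroup_affineProduct {p d e : ℕ} (χ : Multiplicative (ZMod (p ^ d)) →* (ZMod (p ^ e))ˣ) :
    IsPGroup p (AffineProduct χ) := by
  refine IsPGroup.of_card (n := e + d) ?_
  rw [SemidirectProduct.card, Nat.card_congr toAdd, Nat.card_congr toAdd, Nat.card_zmod,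
    Nat.card_zmod, pow_add]

variable {p d e : ℕ} [Fact p.Prime] [NeZero e]
  {χ : Multiplicative (ZMod (p ^ d)) →* (ZMod (p ^ e))ˣ}

theorem primeResidue_apply_eq_one (χ : Multiplicative (ZMod (p ^ d)) →* (ZMod (p ^ e))ˣ)
    (g : Multiplicative (ZMod (p ^ d))) : primeResidue p e (χ g) = 1 := by
  have hg : g ^ p ^ d = 1 := by
    rw [← toAdd_eq_zero, toAdd_pow, nsmul_eq_mul, ZMod.natCast_self, zero_mul]
  calc primeResidue p e (χ g) = primeResidue p e (χ (g ^ p ^ d)) := by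
        rw [map_pow, Units.val_pow_eq_pow_val, map_pow, ZMod.pow_card_pow]
    _ = 1 := by rw [hg, map_one, Units.val_one, map_one]

theorem pow_prime_pow_eq_one_iff (hodd : Odd p) (x : AffineProduct χ) (r : ℕ) :
    x ^ p ^ r = 1 ↔ (p : ZMod (p ^ d)) ^ r * x.right.toAdd = 0 ∧
      (p : ZMod (p ^ e)) ^ r * x.left.toAdd = 0 := by
  obtain ⟨c, hc⟩ := exists_geom_sum_prime_pow_eq hodd
    ((primeResidue_eq_one_iff _).1 (primeResidue_apply_eq_one χ x.right)) r
  have hunit : IsUnit (1 + p * c : ZMod (p ^ e)) := isUnit_of_prime_dvd_sub_one (by simp)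
  rw [affineProduct_ext_iff, AffineProduct.toAdd_pow_left, hc, AffineProduct.pow_right,
    SemidirectProduct.one_right, SemidirectProduct.one_left, toAdd_one, ← toAdd_eq_zero, toAdd_pow,
    nsmul_eq_mul, Nat.cast_pow, mul_right_comm, hunit.mul_left_eq_zero]

variable [NeZero d]

theorem exists_toAdd_hom_eq (θ : AffineProduct χ →* Multiplicative (ZMod p)) :
    ∃ α β : ZMod p, ∀ x, (θ x).toAdd =
      primeResidue p e x.left.toAdd * α + primeResidue p d x.right.toAdd * β := by
  refine ⟨(θ (SemidirectProduct.inl (ofAdd 1))).toAdd, (θ (SemidirectProduct.inr (ofAdd 1))).toAdd,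
    fun x ↦ ?_⟩
  nth_rw 1 [← SemidirectProduct.inl_left_mul_inr_right x, map_mul, toAdd_mul]
  congr 1
  · exact (toAdd_hom_apply_ofAdd (θ.comp SemidirectProduct.inl) _).trans (mul_comm _ _)
  · exact (toAdd_hom_apply_ofAdd (θ.comp SemidirectProduct.inr) _).trans (mul_comm _ _)

theorem exists_hom_toAdd_eq (α β : ZMod p) :
    ∃ θ : AffineProduct χ →* Multiplicative (ZMod p), ∀ x, (θ x).toAdd =
      primeResidue p e x.left.toAdd * α + primeResidue p d x.right.toAdd * β := by
  refine ⟨.mk' (fun x ↦ ofAdd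
    (primeResidue p e x.left.toAdd * α + primeResidue p d x.right.toAdd * β))
    fun x y ↦ toAdd.injective ?_, fun _ ↦ rfl⟩
  simp only [AffineProduct.toAdd_mul_left, SemidirectProduct.mul_right, toAdd_mul, toAdd_ofAdd,
    map_add, map_mul, primeResidue_apply_eq_one]
  ring

theorem closure_pair_eq_top_iff_det_ne_zero (x y : AffineProduct χ) :
    Subgroup.closure {x, y} = ⊤ ↔
      !![primeResidue p e x.left.toAdd, primeResidue p d x.right.toAdd;
        primeResidue p e y.left.toAdd, primeResidue p d y.right.toAdd].det ≠ 0 := by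
  rw [closure_eq_top_iff_forall_hom_zmod (isPGroup_affineProduct χ), ne_eq,
    ← Matrix.exists_mulVec_eq_zero_iff]
  simp only [Set.forall_mem_insert, Set.mem_singleton_iff, forall_eq, ← toAdd_eq_zero]
  constructor
  · rintro h ⟨v, hv, hMv⟩
    obtain ⟨θ, hθ⟩ := exists_hom_toAdd_eq (χ := χ) (v 0) (v 1)
    have hθ_one : θ = 1 :=
      h θ ⟨by simpa [hθ, Matrix.vecHead, Matrix.vecTail] using congrFun hMv 0,
        by simpa [hθ, Matrix.vecHead, Matrix.vecTail] using congrFun hMv 1⟩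
    have hleft : v 0 = 0 := by simpa [hθ_one] using (hθ (SemidirectProduct.inl (ofAdd 1))).symm
    have hright : v 1 = 0 := by simpa [hθ_one] using (hθ (SemidirectProduct.inr (ofAdd 1))).symm
    exact hv (funext (Fin.forall_fin_two.2 ⟨hleft, hright⟩))
  · intro h θ hθ
    obtain ⟨α, β, hαβ⟩ := exists_toAdd_hom_eq θ
    have hzero : ![α, β] = 0 := by
      by_contra hne
      refine h ⟨_, hne, funext (Fin.forall_fin_two.2 ⟨?_, ?_⟩)⟩
      · simpa [hαβ, mul_comm] using hθ.1
      · simpa [hαβ, mul_comm] using hθ.2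
    have hα : α = 0 := congrFun hzero 0
    have hβ : β = 0 := congrFun hzero 1
    exact MonoidHom.ext fun x ↦ toAdd.injective (by simp [hαβ, hα, hβ])

end AffineProduct

section Presentation

open Multiplicative SemidirectProduct

/-- The character through which the generator `b` of `M₁(p,d,e,f)` acts on `⟨a⟩`: since
`b⁻¹ab = a^(1+p^f)`, it is `b⁻¹` that acts as multiplication by `1 + p ^ f`. -/
def IsM1Character {p d e : ℕ} (f : ℕ) (χ : Multiplicative (ZMod (p ^ d)) →* (ZMod (p ^ e))ˣ) :
    Prop :=
  (χ (ofAdd (-1)) : ZMod (p ^ e)) = 1 + (p : ZMod (p ^ e)) ^ f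

theorem forall_mem_M1rels_lift_eq_one_iff {p d e f : ℕ} {K : Type*} [Group K] (v : Fin 2 → K) :
    (∀ r ∈ M1rels p d e f, FreeGroup.lift v r = 1) ↔
      v 0 ^ p ^ e = 1 ∧ v 1 ^ p ^ d = 1 ∧ v 0 * v 1 = v 1 * v 0 ^ (1 + p ^ f) := by
  have hconj (x y z : K) : y⁻¹ * x * y * z⁻¹ = 1 ↔ x * y = y * z := by
    rw [mul_inv_eq_one, mul_assoc, inv_mul_eq_iff_eq_mul]
  simp [M1rels, hconj]

theorem exists_isM1Character {p d e f : ℕ} (hodd : Odd p) (hf : f ≠ 0) (hedf : e ≤ d + f) :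
    ∃ χ : Multiplicative (ZMod (p ^ d)) →* (ZMod (p ^ e))ˣ, IsM1Character f χ := by
  have hdvd : (p : ZMod (p ^ e)) ^ f ∣ 1 + (p : ZMod (p ^ e)) ^ f - 1 := by simp
  obtain ⟨u, hu⟩ := isUnit_of_prime_dvd_sub_one ((dvd_pow_self _ hf).trans hdvd)
  have hpow : (u : ZMod (p ^ e)) ^ p ^ d = 1 := by
    have := prime_pow_add_dvd_pow_prime_pow_sub_one hodd hf hdvd d
    rwa [natCast_prime_pow_eq_zero_of_le p (by lia), zero_dvd_iff, sub_eq_zero, ← hu] at this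
  obtain ⟨χ, hχ⟩ := exists_hom_zmod_apply_ofAdd_one_eq (n := p ^ d) (x := u⁻¹)
    (by rw [inv_pow, inv_eq_one]; exact Units.ext (by simpa using hpow))
  exact ⟨χ, by rw [IsM1Character, ofAdd_neg, map_inv, hχ, inv_inv, hu]⟩

variable {p d e f : ℕ} [Fact p.Prime] {χ : Multiplicative (ZMod (p ^ d)) →* (ZMod (p ^ e))ˣ}

theorem exists_eq_ofAdd_neg_one_pow {n : ℕ} [NeZero n] (g : Multiplicative (ZMod n)) :
    ∃ m : ℕ, g = ofAdd (-1) ^ m := by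
  obtain ⟨m, hm⟩ := ZMod.natCast_zmod_surjective (-g.toAdd)
  exact ⟨m, toAdd.injective (by simp [hm])⟩

theorem conj_compatible_of_isM1Character (hχ : IsM1Character f χ) {K : Type*} [Group K]
    {φa : Multiplicative (ZMod (p ^ e)) →* K} {φb : Multiplicative (ZMod (p ^ d)) →* K}
    (hconj : φa (ofAdd 1) * φb (ofAdd 1) = φb (ofAdd 1) * φa (ofAdd 1) ^ (1 + p ^ f))
    (g : Multiplicative (ZMod (p ^ d))) :
    φa.comp (unitAction χ g).toMonoidHom = (MulAut.conj (φb g)).toMonoidHom.comp φa := by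
  have hgen : φa.comp (unitAction χ (ofAdd (-1))).toMonoidHom =
      (MulAut.conj (φb (ofAdd (-1)))).toMonoidHom.comp φa := by
    refine hom_zmod_ext ?_
    have hact : unitAction χ (ofAdd (-1)) (ofAdd 1) = ofAdd ((1 + p ^ f : ℕ) : ZMod (p ^ e)) :=
      toAdd.injective (by rw [toAdd_unitAction_apply, hχ]; simp)
    change φa (unitAction χ (ofAdd (-1)) (ofAdd 1)) =
      φb (ofAdd (-1)) * φa (ofAdd 1) * (φb (ofAdd (-1)))⁻¹
    rw [hact, hom_apply_ofAdd_natCast, ofAdd_neg, map_inv, inv_inv, mul_assoc, hconj,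
      inv_mul_cancel_left]
  obtain ⟨m, rfl⟩ := exists_eq_ofAdd_neg_one_pow g
  induction m with
  | zero => ext; simp
  | succ m ih =>
    refine MonoidHom.ext fun z ↦ ?_
    have hz := DFunLike.congr_fun hgen z
    have hih := DFunLike.congr_fun ih (unitAction χ (ofAdd (-1)) z)
    simp only [MonoidHom.comp_apply, MulEquiv.coe_toMonoidHom, MulAut.conj_apply] at hz hih ⊢
    rw [pow_succ, map_mul, MulAut.mul_apply, hih, hz, map_mul, mul_inv_rev]
    simp only [mul_assoc]

theorem nonempty_M1_mulEquiv_affineProduct (hχ : IsM1Character f χ) :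
    Nonempty (M1 p d e f ≃* AffineProduct χ) := by
  let v : Fin 2 → AffineProduct χ := ![inl (ofAdd 1), inr (ofAdd 1)]
  have hv : ∀ r ∈ M1rels p d e f, FreeGroup.lift v r = 1 := by
    rw [forall_mem_M1rels_lift_eq_one_iff]
    refine ⟨?_, ?_, ?_⟩
    · simp [v, ← map_pow, ← ofAdd_nsmul]
    · simp [v, ← map_pow, ← ofAdd_nsmul]
    · rw [← inv_mul_eq_iff_eq_mul, ← mul_assoc]
      change (inr (ofAdd 1))⁻¹ * inl (ofAdd 1) * inr (ofAdd 1) = inl (ofAdd 1) ^ (1 + p ^ f)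
      rw [← map_inv, ← inl_aut_inv, ← map_inv, ← map_pow, ← ofAdd_neg]
      refine congrArg inl (toAdd.injective ?_)
      rw [toAdd_unitAction_apply, hχ]
      simp
  have hof : ∀ r ∈ M1rels p d e f, FreeGroup.lift (.of : Fin 2 → M1 p d e f) r = 1 :=
    fun r hr ↦ (lift_comp_presentedGroup_of (.id _) r).trans (PresentedGroup.one_of_mem hr)
  obtain ⟨ha, hb, hconj⟩ := (forall_mem_M1rels_lift_eq_one_iff _).1 hof
  obtain ⟨φa, hφa⟩ := exists_hom_zmod_apply_ofAdd_one_eq ha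
  obtain ⟨φb, hφb⟩ := exists_hom_zmod_apply_ofAdd_one_eq hb
  rw [← hφa, ← hφb] at hconj
  refine ⟨(PresentedGroup.toGroup hv).toMulEquiv
    (lift φa φb (conj_compatible_of_isM1Character hχ hconj)) ?_ ?_⟩
  · refine PresentedGroup.ext (Fin.forall_fin_two.2 ⟨?_, ?_⟩) <;> simp [v, hφa, hφb]
  · refine hom_ext (hom_zmod_ext ?_) (hom_zmod_ext ?_) <;> simp [v, hφa, hφb]

end Presentation

section Character

open Multiplicative

variable {p d e f : ℕ} [Fact p.Prime] {χ : Multiplicative (ZMod (p ^ d)) →* (ZMod (p ^ e))ˣ}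

theorem orderOf_one_add_prime_pow (hodd : Odd p) (hf : f ≠ 0) (hfe : f ≤ e) :
    orderOf (1 + (p : ZMod (p ^ e)) ^ f) = p ^ (e - f) := by
  obtain ⟨n, rfl⟩ := Nat.exists_eq_add_of_le' hfe
  have hp : p.Prime := Fact.out
  have hp3 : 3 ≤ p := hp.two_le.lt_of_ne fun h ↦ absurd (h ▸ hodd) (by decide)
  have hf1 : 1 ≤ f := Nat.one_le_iff_ne_zero.2 hf
  have horder := ZMod.orderOf_one_add_mul_prime_pow hp f hf (by nlinarith) 1
    (by exact_mod_cast hp.not_dvd_one) n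
  rw [Nat.add_sub_cancel]
  simpa using horder

theorem mem_ker_unitsMap_prime_pow_iff (hfe : f ≤ e) (v : (ZMod (p ^ e))ˣ) :
    v ∈ (ZMod.unitsMap (pow_dvd_pow p hfe)).ker ↔
      (p : ZMod (p ^ e)) ^ f ∣ (v : ZMod (p ^ e)) - 1 := by
  rw [← Nat.cast_pow, ← castHom_eq_zero_iff (pow_dvd_pow p hfe), map_sub, map_one, sub_eq_zero,
    MonoidHom.mem_ker, Units.ext_iff]
  rfl

theorem natCard_ker_unitsMap_prime_pow (hf : f ≠ 0) (hfe : f ≤ e) :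
    Nat.card (ZMod.unitsMap (pow_dvd_pow p hfe)).ker = p ^ (e - f) := by
  have hp : p.Prime := Fact.out
  have hcard := (ZMod.unitsMap (pow_dvd_pow p hfe)).ker.card_mul_index
  rw [Subgroup.index_ker, MonoidHom.range_eq_top.2 (ZMod.unitsMap_surjective _), Subgroup.card_top,
    Nat.card_eq_fintype_card (α := (ZMod _)ˣ), Nat.card_eq_fintype_card (α := (ZMod _)ˣ),
    ZMod.card_units_eq_totient, ZMod.card_units_eq_totient, Nat.totient_prime_pow hp (by lia),
    Nat.totient_prime_pow hp (by lia)] at hcard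
  refine Nat.eq_of_mul_eq_mul_right
    (Nat.mul_pos (pow_pos hp.pos (f - 1)) (Nat.sub_pos_of_lt hp.one_lt)) (hcard.trans ?_)
  rw [← mul_assoc, ← pow_add, show e - f + (f - 1) = e - 1 by lia]

namespace IsM1Character

theorem prime_pow_dvd_apply_sub_one (hχ : IsM1Character f χ) (g : Multiplicative (ZMod (p ^ d))) :
    (p : ZMod (p ^ e)) ^ f ∣ (χ g : ZMod (p ^ e)) - 1 := by
  obtain ⟨m, rfl⟩ := exists_eq_ofAdd_neg_one_pow g
  rw [map_pow, Units.val_pow_eq_pow_val, hχ]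
  simpa using sub_one_dvd_pow_sub_one (1 + (p : ZMod (p ^ e)) ^ f) m

theorem apply_eq_one (hχ : IsM1Character f χ) (hef : e ≤ f)
    (g : Multiplicative (ZMod (p ^ d))) : (χ g : ZMod (p ^ e)) = 1 := by
  have := hχ.prime_pow_dvd_apply_sub_one g
  rwa [natCast_prime_pow_eq_zero_of_le p hef, zero_dvd_iff, sub_eq_zero] at this

theorem prime_pow_add_dvd_apply_sub_one (hχ : IsM1Character f χ) (hodd : Odd p) (hf : f ≠ 0) {r : ℕ}
    {j : ZMod (p ^ d)} (hj : (p : ZMod (p ^ d)) ^ r ∣ j) :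
    (p : ZMod (p ^ e)) ^ (f + r) ∣ (χ (ofAdd j) : ZMod (p ^ e)) - 1 := by
  obtain ⟨z, rfl⟩ := hj
  have hsmul : (p : ZMod (p ^ d)) ^ r * z = p ^ r • z := by rw [nsmul_eq_mul, Nat.cast_pow]
  rw [hsmul, ofAdd_nsmul, map_pow, Units.val_pow_eq_pow_val]
  exact prime_pow_add_dvd_pow_prime_pow_sub_one hodd hf (hχ.prime_pow_dvd_apply_sub_one _) r

theorem apply_mul_eq_self (hχ : IsM1Character f χ) (hodd : Odd p) (hf : f ≠ 0) {j : ZMod (p ^ d)}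
    (hj : (p : ZMod (p ^ d)) ^ f * j = 0) {k : ZMod (p ^ e)} (hk : (p : ZMod (p ^ e)) ^ d * k = 0) :
    (χ (ofAdd j) : ZMod (p ^ e)) * k = k := by
  rw [prime_pow_mul_eq_zero_iff] at hj
  obtain ⟨c, hc⟩ := (pow_dvd_pow (p : ZMod (p ^ e)) (show d ≤ f + (d - f) by lia)).trans
    (hχ.prime_pow_add_dvd_apply_sub_one hodd hf hj)
  linear_combination k * hc + c * hk

theorem exists_geom_sum_apply_eq (hχ : IsM1Character f χ) (hodd : Odd p) (hf : f ≠ 0)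
    {j : ZMod (p ^ d)} (hj : (p : ZMod (p ^ d)) ^ f * j = 0) :
    ∃ c, ∑ m ∈ Finset.range (1 + p ^ f), (χ (ofAdd j) : ZMod (p ^ e)) ^ m =
      1 + (p : ZMod (p ^ e)) ^ f * (1 + p * c) := by
  obtain ⟨c, hc⟩ := exists_geom_sum_prime_pow_eq hodd
    ((dvd_pow_self _ hf).trans (hχ.prime_pow_dvd_apply_sub_one (ofAdd j))) f
  have hpow : (χ (ofAdd j) : ZMod (p ^ e)) ^ p ^ f = 1 := by
    rw [← Units.val_pow_eq_pow_val, ← map_pow, ← ofAdd_nsmul, nsmul_eq_mul, Nat.cast_pow, hj]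
    simp
  exact ⟨c, by rw [add_comm 1, Finset.sum_range_succ, hc, hpow, add_comm]⟩

theorem natCard_range (hχ : IsM1Character f χ) (hodd : Odd p) (hf : f ≠ 0) (hfe : f ≤ e) :
    Nat.card χ.range = p ^ (e - f) := by
  have hrange : χ.range = Subgroup.zpowers (χ (ofAdd (-1))) := by
    refine le_antisymm ?_ (Subgroup.zpowers_le.2 ⟨_, rfl⟩)
    rintro _ ⟨g, rfl⟩
    obtain ⟨m, rfl⟩ := exists_eq_ofAdd_neg_one_pow g
    exact map_pow χ _ m ▸ Subgroup.npow_mem_zpowers _ m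
  rw [hrange, Nat.card_zpowers, ← orderOf_units, hχ, orderOf_one_add_prime_pow hodd hf hfe]

theorem range_eq_ker_unitsMap (hχ : IsM1Character f χ) (hodd : Odd p) (hf : f ≠ 0) (hfe : f ≤ e) :
    χ.range = (ZMod.unitsMap (pow_dvd_pow p hfe)).ker := by
  refine Subgroup.eq_of_le_of_card_ge ?_ ?_
  · rintro _ ⟨g, rfl⟩
    exact (mem_ker_unitsMap_prime_pow_iff hfe _).2 (hχ.prime_pow_dvd_apply_sub_one g)
  · rw [hχ.natCard_range hodd hf hfe, natCard_ker_unitsMap_prime_pow hf hfe]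

theorem natCard_ker (hχ : IsM1Character f χ) (hodd : Odd p) (hf : f ≠ 0) (hfe : f ≤ e)
    (hedf : e ≤ d + f) : Nat.card χ.ker = p ^ (d + f - e) := by
  have hcard := χ.ker.card_mul_index
  rw [Subgroup.index_ker, hχ.natCard_range hodd hf hfe, Nat.card_congr toAdd,
    Nat.card_zmod] at hcard
  refine Nat.eq_of_mul_eq_mul_right (pow_pos (Fact.out : p.Prime).pos (e - f)) ?_
  rw [hcard, ← pow_add]
  congr 1
  lia

theorem natCard_apply_mul_eq_one (hχ : IsM1Character f χ) (hodd : Odd p) (hf : f ≠ 0) (hfe : f ≤ e)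
    (hedf : e ≤ d + f) {s : ZMod (p ^ e)} (hs : (p : ZMod (p ^ e)) ^ f ∣ s - 1) :
    Nat.card {l : ZMod (p ^ d) // (χ (ofAdd l) : ZMod (p ^ e)) * s = 1} = p ^ (d + f - e) := by
  obtain ⟨u, rfl⟩ := isUnit_of_prime_dvd_sub_one ((dvd_pow_self _ hf).trans hs)
  obtain ⟨g, hg⟩ : u⁻¹ ∈ χ.range := by
    rw [hχ.range_eq_ker_unitsMap hodd hf hfe, inv_mem_iff,
      mem_ker_unitsMap_prime_pow_iff hfe]
    exact hs
  rw [← hχ.natCard_ker hodd hf hfe hedf, ← Nat.card_congr (χ.fiberEquivKer g)]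
  refine Nat.card_congr (ofAdd.subtypeEquiv fun l ↦ ?_)
  rw [Set.mem_preimage, Set.mem_singleton_iff, hg, eq_inv_iff_mul_eq_one, Units.ext_iff]
  rfl

end IsM1Character

end Character

section AutMatrix

open Multiplicative Finset

variable {p d e f : ℕ} [Fact p.Prime] {χ : Multiplicative (ZMod (p ^ d)) →* (ZMod (p ^ e))ˣ}

theorem IsM1Character.mul_eq_mul_pow_iff (hχ : IsM1Character f χ) (hodd : Odd p) (hf : f ≠ 0)
    (x : AffineProduct χ) {y : AffineProduct χ}
    (hy : (p : ZMod (p ^ e)) ^ d * y.left.toAdd = 0) :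
    x * y = y * x ^ (1 + p ^ f) ↔ (p : ZMod (p ^ d)) ^ f * x.right.toAdd = 0 ∧
      χ y.right * (∑ m ∈ range (1 + p ^ f), (χ x.right : ZMod (p ^ e)) ^ m) * x.left.toAdd =
        x.left.toAdd := by
  have hright : (x * y).right = (y * x ^ (1 + p ^ f)).right ↔
      (p : ZMod (p ^ d)) ^ f * x.right.toAdd = 0 := by
    rw [SemidirectProduct.mul_right, SemidirectProduct.mul_right, AffineProduct.pow_right,
      mul_comm x.right, mul_right_inj, pow_add, pow_one, left_eq_mul, ← toAdd_eq_zero,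
      toAdd_pow, nsmul_eq_mul, Nat.cast_pow]
  rw [affineProduct_ext_iff, hright]
  refine and_congr_right fun hx ↦ ?_
  have hfix : (χ x.right : ZMod (p ^ e)) * y.left.toAdd = y.left.toAdd :=
    hχ.apply_mul_eq_self hodd hf hx hy
  rw [AffineProduct.toAdd_mul_left, AffineProduct.toAdd_mul_left, AffineProduct.toAdd_pow_left,
    hfix, add_comm, add_right_inj, mul_assoc]
  exact eq_comm

/-- The conditions on `(i, j), (k, l)` for `a ↦ (i, j)`, `b ↦ (k, l)` to define an automorphism of
`M₁(p,d,e,f)`, identified with `AffineProduct χ`: the first three fields come from the relations,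
the last one says that the images generate. -/
structure IsAutMatrix [NeZero d] [NeZero e]
    (χ : Multiplicative (ZMod (p ^ d)) →* (ZMod (p ^ e))ˣ) (f : ℕ)
    (i : ZMod (p ^ e)) (j : ZMod (p ^ d)) (k : ZMod (p ^ e)) (l : ZMod (p ^ d)) : Prop where
  pow_mul_top : (p : ZMod (p ^ d)) ^ f * j = 0
  pow_mul_base : (p : ZMod (p ^ e)) ^ d * k = 0
  conj : χ (ofAdd l) * (∑ m ∈ range (1 + p ^ f), (χ (ofAdd j) : ZMod (p ^ e)) ^ m) * i = i
  det_ne_zero :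
    !![primeResidue p e i, primeResidue p d j; primeResidue p e k, primeResidue p d l].det ≠ 0

variable [NeZero d] [NeZero e]

theorem isAutMatrix_iff (hχ : IsM1Character f χ) (hodd : Odd p) (hf : f ≠ 0) (hde : d ≤ e)
    (v : Fin 2 → AffineProduct χ) :
    (∀ r ∈ M1rels p d e f, FreeGroup.lift v r = 1) ∧ Subgroup.closure (Set.range v) = ⊤ ↔
      IsAutMatrix χ f (v 0).left.toAdd (v 0).right.toAdd (v 1).left.toAdd (v 1).right.toAdd := by
  have hrange : Set.range v = {v 0, v 1} := by
    ext
    simp [Fin.exists_fin_two, eq_comm]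
  rw [forall_mem_M1rels_lift_eq_one_iff, hrange, closure_pair_eq_top_iff_det_ne_zero,
    pow_prime_pow_eq_one_iff hodd, pow_prime_pow_eq_one_iff hodd,
    natCast_prime_pow_eq_zero_of_le p hde, natCast_prime_pow_eq_zero_of_le p (le_refl d),
    natCast_prime_pow_eq_zero_of_le p (le_refl e)]
  simp only [zero_mul, true_and]
  constructor
  · rintro ⟨⟨hk, hconj⟩, hdet⟩
    obtain ⟨hj, hconj⟩ := (hχ.mul_eq_mul_pow_iff hodd hf _ hk).1 hconj
    exact ⟨hj, hk, hconj, hdet⟩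
  · rintro ⟨hj, hk, hconj, hdet⟩
    exact ⟨⟨hk, (hχ.mul_eq_mul_pow_iff hodd hf _ hk).2 ⟨hj, hconj⟩⟩, hdet⟩

theorem natCard_mulAut_M1 (hχ : IsM1Character f χ) (hodd : Odd p) (hf : f ≠ 0) (hde : d ≤ e) :
    Nat.card (MulAut (M1 p d e f)) =
      Nat.card {q : (ZMod (p ^ e) × ZMod (p ^ d)) × ZMod (p ^ e) × ZMod (p ^ d) //
        IsAutMatrix χ f q.1.1 q.1.2 q.2.1 q.2.2} := by
  obtain ⟨ψ⟩ := nonempty_M1_mulEquiv_affineProduct hχ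
  let coords : AffineProduct χ ≃ ZMod (p ^ e) × ZMod (p ^ d) :=
    SemidirectProduct.equivProd.trans (toAdd.prodCongr toAdd)
  rw [natCard_mulAut_presentedGroup ψ]
  exact Nat.card_congr (((finTwoArrowEquiv _).trans (coords.prodCongr coords)).subtypeEquiv
    (isAutMatrix_iff hχ hodd hf hde))

theorem IsM1Character.primeResidue_ne_zero (hχ : IsM1Character f χ) (hodd : Odd p) (hf : f ≠ 0)
    (hfe : f < e) {j l : ZMod (p ^ d)} (hj : (p : ZMod (p ^ d)) ^ f * j = 0)
    (hconj : χ (ofAdd l) * (∑ m ∈ range (1 + p ^ f), (χ (ofAdd j) : ZMod (p ^ e)) ^ m) = 1) :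
    primeResidue p d l ≠ 0 := by
  -- If `p ∣ l`, then `χ l ≡ 1` modulo `p ^ (f + 1)`, while the geometric sum is `≡ 1 + p ^ f`.
  intro hl
  rw [primeResidue_eq_zero_iff, ← pow_one (p : ZMod (p ^ d))] at hl
  obtain ⟨a, ha⟩ := hχ.prime_pow_add_dvd_apply_sub_one hodd hf hl
  obtain ⟨c, hc⟩ := hχ.exists_geom_sum_apply_eq hodd hf hj
  set s := ∑ m ∈ range (1 + p ^ f), (χ (ofAdd j) : ZMod (p ^ e)) ^ m
  have hzero : (p : ZMod (p ^ e)) ^ f * (1 + p * (c + a * s)) = 0 := by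
    linear_combination hconj - s * ha - hc
  have hone : primeResidue p e (1 + p * (c + a * s)) = 1 := by
    rw [primeResidue_eq_one_iff, add_sub_cancel_left]
    exact dvd_mul_right _ _
  exact one_ne_zero (hone.symm.trans (primeResidue_eq_zero_of_prime_pow_mul hfe hzero))

theorem isAutMatrix_iff_of_lt (hχ : IsM1Character f χ) (hodd : Odd p) (hf : f ≠ 0) (hde : d ≤ e)
    (hfe : f < e) (i : ZMod (p ^ e)) (j : ZMod (p ^ d)) (k : ZMod (p ^ e)) (l : ZMod (p ^ d)) :
    IsAutMatrix χ f i j k l ↔ IsUnit i ∧ (p : ZMod (p ^ e)) ^ d * k = 0 ∧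
      (p : ZMod (p ^ d)) ^ f * j = 0 ∧
      χ (ofAdd l) * (∑ m ∈ range (1 + p ^ f), (χ (ofAdd j) : ZMod (p ^ e)) ^ m) = 1 := by
  have hdet (hj : (p : ZMod (p ^ d)) ^ f * j = 0) (hk : (p : ZMod (p ^ e)) ^ d * k = 0) :
      !![primeResidue p e i, primeResidue p d j; primeResidue p e k, primeResidue p d l].det =
        primeResidue p e i * primeResidue p d l := by
    have : primeResidue p d j * primeResidue p e k = 0 := by
      rcases hde.eq_or_lt with rfl | hlt
      · rw [primeResidue_eq_zero_of_prime_pow_mul hfe hj, zero_mul]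
      · rw [primeResidue_eq_zero_of_prime_pow_mul hlt hk, mul_zero]
    rw [Matrix.det_fin_two_of, this, sub_zero]
  constructor
  · rintro ⟨hj, hk, hconj, h⟩
    rw [hdet hj hk] at h
    have hi := (primeResidue_ne_zero_iff_isUnit i).1 (left_ne_zero_of_mul h)
    exact ⟨hi, hk, hj, hi.mul_eq_right.1 hconj⟩
  · rintro ⟨hi, hk, hj, hconj⟩
    refine ⟨hj, hk, by rw [hconj, one_mul], ?_⟩
    rw [hdet hj hk]
    exact mul_ne_zero ((primeResidue_ne_zero_iff_isUnit i).2 hi)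
      (hχ.primeResidue_ne_zero hodd hf hfe hj hconj)

theorem isAutMatrix_iff_of_le (hχ : IsM1Character f χ) (hdf : d ≤ f) (hef : e ≤ f)
    (i : ZMod (p ^ e)) (j : ZMod (p ^ d)) (k : ZMod (p ^ e)) (l : ZMod (p ^ d)) :
    IsAutMatrix χ f i j k l ↔ (p : ZMod (p ^ e)) ^ d * k = 0 ∧
      !![primeResidue p e i, primeResidue p d j;
        primeResidue p e k, primeResidue p d l].det ≠ 0 := by
  refine ⟨fun h ↦ ⟨h.pow_mul_base, h.det_ne_zero⟩, fun ⟨hk, hdet⟩ ↦ ⟨?_, hk, ?_, hdet⟩⟩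
  · rw [natCast_prime_pow_eq_zero_of_le p hdf, zero_mul]
  · simp [hχ.apply_eq_one hef, natCast_prime_pow_eq_zero_of_le p hef]

theorem isAutMatrix_iff_of_lt_of_le (hχ : IsM1Character f χ) (hde : d < e) (hef : e ≤ f)
    (i : ZMod (p ^ e)) (j : ZMod (p ^ d)) (k : ZMod (p ^ e)) (l : ZMod (p ^ d)) :
    IsAutMatrix χ f i j k l ↔ IsUnit i ∧ IsUnit l ∧ (p : ZMod (p ^ e)) ^ d * k = 0 := by
  rw [isAutMatrix_iff_of_le hχ (hde.le.trans hef) hef, and_comm, ← and_assoc]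
  refine and_congr_left fun hk ↦ ?_
  rw [Matrix.det_fin_two_of, primeResidue_eq_zero_of_prime_pow_mul hde hk, mul_zero, sub_zero,
    mul_ne_zero_iff, primeResidue_ne_zero_iff_isUnit, primeResidue_ne_zero_iff_isUnit]

theorem natCard_mulAut_M1_of_lt (hχ : IsM1Character f χ) (hodd : Odd p) (hf : f ≠ 0) (hde : d ≤ e)
    (hfe : f < e) (hedf : e ≤ d + f) :
    Nat.card (MulAut (M1 p d e f)) = p ^ (2 * d + f - 1 + min d f) * (p - 1) := by
  let s (j : ZMod (p ^ d)) : ZMod (p ^ e) :=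
    ∑ m ∈ range (1 + p ^ f), (χ (ofAdd j) : ZMod (p ^ e)) ^ m
  have hs (j : {j : ZMod (p ^ d) // (p : ZMod (p ^ d)) ^ f * j = 0}) :
      Nat.card {l // (χ (ofAdd l) : ZMod (p ^ e)) * s j = 1} = p ^ (d + f - e) := by
    obtain ⟨c, hc⟩ := hχ.exists_geom_sum_apply_eq hodd hf j.2
    exact hχ.natCard_apply_mul_eq_one hodd hf hfe.le hedf (by simp [s, hc])
  let E : {q : (ZMod (p ^ e) × ZMod (p ^ d)) × ZMod (p ^ e) × ZMod (p ^ d) //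
        IsAutMatrix χ f q.1.1 q.1.2 q.2.1 q.2.2} ≃
      {i : ZMod (p ^ e) // IsUnit i} × {k : ZMod (p ^ e) // (p : ZMod (p ^ e)) ^ d * k = 0} ×
        Σ j : {j : ZMod (p ^ d) // (p : ZMod (p ^ d)) ^ f * j = 0},
          {l // (χ (ofAdd l) : ZMod (p ^ e)) * s j = 1} :=
    { toFun q :=
        have h := (isAutMatrix_iff_of_lt hχ hodd hf hde hfe _ _ _ _).1 q.2
        (⟨q.1.1.1, h.1⟩, ⟨q.1.2.1, h.2.1⟩, ⟨⟨q.1.1.2, h.2.2.1⟩, ⟨q.1.2.2, h.2.2.2⟩⟩)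
      invFun r := ⟨((r.1, r.2.2.1), (r.2.1, r.2.2.2)),
        (isAutMatrix_iff_of_lt hχ hodd hf hde hfe _ _ _ _).2
          ⟨r.1.2, r.2.1.2, r.2.2.1.2, r.2.2.2.2⟩⟩ }
  rw [natCard_mulAut_M1 hχ hodd hf hde, Nat.card_congr E, Nat.card_prod, Nat.card_prod,
    Nat.card_sigma, sum_congr rfl fun j _ ↦ hs j, sum_const, card_univ,
    ← Nat.card_eq_fintype_card, natCard_prime_pow_mul_eq_zero, natCard_prime_pow_mul_eq_zero,
    natCard_isUnit_zmod_prime_pow, min_eq_right hde, smul_eq_mul,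
    show 2 * d + f - 1 + min d f = e - 1 + d + min d f + (d + f - e) by have := NeZero.pos d; lia]
  ring

theorem natCard_mulAut_M1_of_lt_of_le (hχ : IsM1Character f χ) (hodd : Odd p) (hf : f ≠ 0)
    (hde : d < e) (hef : e ≤ f) :
    Nat.card (MulAut (M1 p d e f)) = p ^ (3 * d + e - 2) * (p - 1) ^ 2 := by
  let E : {q : (ZMod (p ^ e) × ZMod (p ^ d)) × ZMod (p ^ e) × ZMod (p ^ d) //
        IsAutMatrix χ f q.1.1 q.1.2 q.2.1 q.2.2} ≃
      {i : ZMod (p ^ e) // IsUnit i} × {l : ZMod (p ^ d) // IsUnit l} ×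
        {k : ZMod (p ^ e) // (p : ZMod (p ^ e)) ^ d * k = 0} × ZMod (p ^ d) :=
    { toFun q :=
        have h := (isAutMatrix_iff_of_lt_of_le hχ hde hef _ _ _ _).1 q.2
        (⟨q.1.1.1, h.1⟩, ⟨q.1.2.2, h.2.1⟩, ⟨q.1.2.1, h.2.2⟩, q.1.1.2)
      invFun r := ⟨((r.1, r.2.2.2), (r.2.2.1, r.2.1)),
        (isAutMatrix_iff_of_lt_of_le hχ hde hef _ _ _ _).2 ⟨r.1.2, r.2.1.2, r.2.2.1.2⟩⟩ }
  have hd := NeZero.pos d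
  rw [natCard_mulAut_M1 hχ hodd hf hde.le, Nat.card_congr E, Nat.card_prod, Nat.card_prod,
    Nat.card_prod, natCard_isUnit_zmod_prime_pow, natCard_isUnit_zmod_prime_pow,
    natCard_prime_pow_mul_eq_zero, min_eq_right hde.le, Nat.card_zmod,
    show 3 * d + e - 2 = e - 1 + (d - 1) + d + d by lia]
  ring

theorem natCard_mulAut_M1_self {χ : Multiplicative (ZMod (p ^ e)) →* (ZMod (p ^ e))ˣ}
    (hχ : IsM1Character e χ) (hodd : Odd p) :
    Nat.card (MulAut (M1 p e e e)) = p ^ (4 * e - 3) * (p ^ 2 - 1) * (p - 1) := by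
  let E : {q : (ZMod (p ^ e) × ZMod (p ^ e)) × ZMod (p ^ e) × ZMod (p ^ e) //
        IsAutMatrix χ e q.1.1 q.1.2 q.2.1 q.2.2} ≃
      {M : Matrix (Fin 2) (Fin 2) (ZMod (p ^ e)) // (M.map (primeResidue p e)).det ≠ 0} :=
    { toFun q := ⟨!![q.1.1.1, q.1.1.2; q.1.2.1, q.1.2.2], by
        simpa [Matrix.det_fin_two] using q.2.det_ne_zero⟩
      invFun M := ⟨((M.1 0 0, M.1 0 1), (M.1 1 0, M.1 1 1)), by
        rw [isAutMatrix_iff_of_le hχ le_rfl le_rfl, natCast_prime_pow_eq_zero_of_le p le_rfl]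
        simpa [Matrix.det_fin_two] using M.2⟩
      right_inv M := Subtype.ext (Matrix.eta_fin_two M.1).symm }
  have he := NeZero.pos e
  have hsq : p ^ 2 - p = p * (p - 1) := by rw [Nat.mul_sub, mul_one, sq]
  rw [natCard_mulAut_M1 hχ hodd (NeZero.ne e) le_rfl, Nat.card_congr E,
    natCard_map_det_ne_zero 2 (primeResidue_surjective p e), natCard_ker_primeResidue, ZMod.card,
    Fin.prod_univ_two, Fin.val_zero, Fin.val_one, pow_zero, pow_one, hsq, ← pow_mul,
    show 4 * e - 3 = (e - 1) * (2 * 2) + 1 by lia]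
  ring

end AutMatrix

/-- The order of `Aut(M₁(p,d,e,f))` (`d ≤ e`, `f ≤ e ≤ d + f`) is
`p^(4e-3)(p²-1)(p-1)` if `f = e = d`; `p^(2(e+f)-1)(p-1)` if `f < e = d`;
`p^(3d+e-2)(p-1)²` if `d < f = e`; `p^(3d+f-1)(p-1)` if `d ≤ f < e`; and
`p^(2(d+f)-1)(p-1)` if `f < d < e`. -/
theorem stmt_12 (p d e f : ℕ) (hp : p.Prime) (hodd : Odd p)
    (hd : 0 < d) (hf : 0 < f) (hde : d ≤ e) (hfe : f ≤ e) (hedf : e ≤ d + f) :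
    (f = e ∧ e = d →
      Nat.card (MulAut (M1 p d e f)) = p ^ (4 * e - 3) * (p ^ 2 - 1) * (p - 1)) ∧
    (f < e ∧ e = d →
      Nat.card (MulAut (M1 p d e f)) = p ^ (2 * (e + f) - 1) * (p - 1)) ∧
    (d < f ∧ f = e →
      Nat.card (MulAut (M1 p d e f)) = p ^ (3 * d + e - 2) * (p - 1) ^ 2) ∧
    (d ≤ f ∧ f < e →
      Nat.card (MulAut (M1 p d e f)) = p ^ (3 * d + f - 1) * (p - 1)) ∧
    (f < d ∧ d < e →
      Nat.card (MulAut (M1 p d e f)) = p ^ (2 * (d + f) - 1) * (p - 1)) := by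
  have : Fact p.Prime := ⟨hp⟩
  have : NeZero d := ⟨hd.ne'⟩
  have : NeZero e := ⟨(hd.trans_le hde).ne'⟩
  obtain ⟨χ, hχ⟩ := exists_isM1Character hodd hf.ne' hedf
  refine ⟨?_, ?_, ?_, ?_, ?_⟩
  · rintro ⟨rfl, rfl⟩
    exact natCard_mulAut_M1_self hχ hodd
  · rintro ⟨hlt, rfl⟩
    rw [natCard_mulAut_M1_of_lt hχ hodd hf.ne' hde hlt hedf, min_eq_right hfe]
    congr 2
    lia
  · rintro ⟨hdf, rfl⟩
    exact natCard_mulAut_M1_of_lt_of_le hχ hodd hf.ne' hdf le_rfl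
  · rintro ⟨hdf, hlt⟩
    rw [natCard_mulAut_M1_of_lt hχ hodd hf.ne' hde hlt hedf, min_eq_left hdf]
    congr 2
    lia
  · rintro ⟨hfd, hlt⟩
    rw [natCard_mulAut_M1_of_lt hχ hodd hf.ne' hde (hfd.trans hlt) hedf, min_eq_right hfd.le]
    congr 2
    lia
end

section
/- Let p be an odd prime, let d, e, f be positive integers with 1 ≤ f < d < e, and let G = M₂(p,d,e,f) with canonical generators a, b. For integers r, s, t, u, the assignment a ↦ bʳaˢ, b ↦ bᵗaᵘ extends to an automorphism of G if and only if r ≡ 0 (mod p^{e−f}), s ≢ 0 (mod p), and t ≡ 1 (mod p^{d−f}). -/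
/-!
The homomorphism to `ℤ/pᵉ` killing `a` forces `p^(e-f) ∣ r`; then `bʳ` is central, because the
multiplicative order of `1 + p^f` modulo `p^d` is `p^(d-f)`. For a prime `p`, the condition
`f + 2 ≤ p * f` under which this holds excludes only `f = 0` and the case `p = 2`, `f = 1`. With
`bʳ` central and `b^(r p^f) = 1`, the conjugation relation for the images says exactly that
`b^(t-1)` commutes with `aˢ`, that is, `p^(d-f) ∣ t - 1`; and the image of `a` has order `p^d` only
if `p ∤ s`. Conversely these conditions give the relations for the images, and the images generate
because `r u - s t` is prime to `p` (Burnside's basis argument in the finite `p`-group `M₂`).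
-/

theorem one_add_prime_pow_pow_modEq_one_iff {p f : ℕ} (hp : p.Prime)
    (hpf : f + 2 ≤ p * f) (n m : ℕ) : (1 + p ^ f) ^ m ≡ 1 [MOD p ^ (n + f)] ↔ p ^ n ∣ m := by
  have hf : f ≠ 0 := by rintro rfl; omega
  have horder := ZMod.orderOf_one_add_mul_prime_pow hp f hf hpf 1
    (Nat.prime_iff_prime_int.1 hp).not_dvd_one n
  rw [← ZMod.natCast_eq_natCast_iff, ← horder, orderOf_dvd_iff_pow_eq_one]
  simp

theorem prime_pow_dvd_geom_sum_one_add_prime_pow_iff {p f : ℕ} (hp : p.Prime)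
    (hpf : f + 2 ≤ p * f) (n m : ℕ) :
    p ^ n ∣ ∑ i ∈ Finset.range m, (1 + p ^ f) ^ i ↔ p ^ n ∣ m := by
  have hsum := geom_sum_mul_add (p ^ f) m
  rw [add_comm (p ^ f) 1] at hsum
  rw [← one_add_prime_pow_pow_modEq_one_iff hp hpf n m, ← hsum, Nat.ModEq.comm,
    Nat.modEq_iff_dvd' (Nat.le_add_left ..), Nat.add_sub_cancel, pow_add,
    Nat.mul_dvd_mul_iff_right (pow_pos hp.pos f)]

theorem orderOf_addRight_one (n : ℕ) : orderOf (Equiv.addRight (1 : ZMod n)) = n := by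
  have heval (m : ℕ) : (Equiv.addRight (1 : ZMod n) ^ m) 0 = m := by simp
  refine Nat.dvd_antisymm (orderOf_dvd_of_pow_eq_one (by ext; simp)) ?_
  rw [← CharP.cast_eq_zero_iff (ZMod n) n, ← heval, pow_orderOf_eq_one, Equiv.Perm.one_apply]

section Group

variable {G : Type*} [Group G] {a b : G} {k p : ℕ}

theorem zpow_pow_eq_one_of_pow_eq_one {n : ℕ} (h : a ^ n = 1) (u : ℤ) : (a ^ u) ^ n = 1 := by
  rw [← zpow_natCast, zpow_comm, zpow_natCast, h, one_zpow]

theorem semiconjBy_pow_pow (h : SemiconjBy b (a ^ k) a) (n : ℕ) :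
    SemiconjBy (b ^ n) (a ^ k ^ n) a := by
  induction n with
  | zero => simp
  | succ n ih =>
    rw [pow_succ' b, pow_succ k, pow_mul]
    exact h.mul_left (ih.pow_right k)

theorem commute_pow_left_iff_modEq (h : SemiconjBy b (a ^ k) a) (n : ℕ) :
    Commute (b ^ n) a ↔ k ^ n ≡ 1 [MOD orderOf a] := by
  rw [← pow_eq_pow_iff_modEq, pow_one, Commute, SemiconjBy, ← (semiconjBy_pow_pow h n).eq,
    mul_right_inj, eq_comm]

theorem mul_zpow_pow_eq (h : SemiconjBy b (a ^ k) a) (u : ℤ) (n : ℕ) :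
    (b * a ^ u) ^ n = b ^ n * (a ^ u) ^ ∑ i ∈ Finset.range n, k ^ i := by
  induction n with
  | zero => simp
  | succ n ih =>
    have hau : SemiconjBy b ((a ^ u) ^ (k * ∑ i ∈ Finset.range n, k ^ i))
        ((a ^ u) ^ ∑ i ∈ Finset.range n, k ^ i) := by
      simpa only [← zpow_natCast, ← zpow_mul, Nat.cast_mul, mul_left_comm u] using
        h.zpow_right (u * ∑ i ∈ Finset.range n, k ^ i : ℤ)
    rw [pow_succ, ih, mul_assoc, ← mul_assoc _ b, ← hau.eq, geom_sum_succ, pow_succ b,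
      pow_succ (a ^ u)]
    simp only [mul_assoc]

theorem commute_zpow_right_iff_of_isCoprime {x : G} {s : ℤ} (hs : IsCoprime s (orderOf a)) :
    Commute x (a ^ s) ↔ Commute x a := by
  refine ⟨fun h ↦ ?_, fun h ↦ h.zpow_right s⟩
  obtain ⟨α, β, hαβ⟩ := hs
  have ha : (a ^ s) ^ α = a := by
    rw [← zpow_mul, mul_comm, eq_sub_of_add_eq hαβ, zpow_sub, mul_comm β, zpow_mul, zpow_natCast,
      pow_orderOf_eq_one]
    simp
  exact ha ▸ h.zpow_right α

theorem semiconjBy_zpow_mul_zpow_iff {z : G} (h : SemiconjBy b (a ^ k) a)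
    (hz : z ∈ Subgroup.center G) (hzk : z ^ k = z) (s t u : ℤ) :
    SemiconjBy (b ^ t * a ^ u) ((z * a ^ s) ^ k) (z * a ^ s) ↔ Commute (b ^ (t - 1)) (a ^ s) := by
  have hz (g : G) : Commute z g := (Subgroup.mem_center_iff.1 hz g).symm
  have hs : SemiconjBy b ((a ^ s) ^ k) (a ^ s) := by
    simpa only [← zpow_natCast, ← zpow_mul, mul_comm s] using h.zpow_right s
  have hpow : (z * a ^ s) ^ k = z * (a ^ s) ^ k := by rw [(hz _).mul_pow, hzk]
  have hu : Commute (a ^ u) ((a ^ s) ^ k) := ((Commute.refl a).zpow_zpow u s).pow_right k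
  calc SemiconjBy (b ^ t * a ^ u) ((z * a ^ s) ^ k) (z * a ^ s)
    _ ↔ z * (b ^ t * (a ^ s) ^ k * a ^ u) = z * (a ^ s * b ^ t * a ^ u) := by
      rw [hpow, SemiconjBy, ← mul_assoc, ← (hz (b ^ t * a ^ u)).eq]
      simp only [mul_assoc, hu.eq]
    _ ↔ b ^ t * (a ^ s) ^ k = a ^ s * b ^ t := by rw [mul_right_inj, mul_left_inj]
    _ ↔ b ^ (t - 1) * a ^ s * b = a ^ s * b ^ (t - 1) * b := by
      rw [mul_assoc _ _ b, ← hs.eq, ← mul_assoc, mul_assoc _ _ b, ← zpow_add_one, sub_add_cancel]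
    _ ↔ Commute (b ^ (t - 1)) (a ^ s) := by rw [mul_left_inj, Commute, SemiconjBy]

theorem normal_zpowers_of_semiconjBy (hgen : Subgroup.closure {a, b} = ⊤)
    (h : SemiconjBy b (a ^ k) a) (ha : IsOfFinOrder a) : (Subgroup.zpowers a).Normal := by
  have : Finite (Subgroup.zpowers a) := finite_zpowers.2 ha
  rw [← Subgroup.normalizer_eq_top_iff, eq_top_iff, ← hgen, Subgroup.closure_le,
    Set.pair_subset_iff]
  refine ⟨Subgroup.le_normalizer (Subgroup.mem_zpowers a), inv_mem_iff.1 ?_⟩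
  refine Subgroup.mem_normalizer_fintype ?_
  rintro _ ⟨i, rfl⟩
  refine ⟨k * i, ?_⟩
  simpa [mul_assoc, eq_inv_mul_iff_mul_eq, zpow_mul] using (h.zpow_right i).eq

theorem exists_normal_index_eq_prime_of_ne_top [Finite G] (hp : p.Prime) (hG : IsPGroup p G)
    {H : Subgroup G} (hH : H ≠ ⊤) : ∃ N : Subgroup G, N.Normal ∧ N.index = p ∧ H ≤ N := by
  have := Fact.mk hp
  obtain ⟨n, hn⟩ := IsPGroup.iff_card.1 hG
  obtain ⟨m, hm⟩ := IsPGroup.iff_card.1 (hG.to_subgroup H)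
  have hmn : m < n := by
    rw [← Nat.pow_lt_pow_iff_right hp.one_lt, ← hn, ← hm]
    exact lt_of_le_of_ne (Subgroup.card_le_card_group H) (mt (Subgroup.card_eq_iff_eq_top H).1 hH)
  obtain ⟨N, hN, hHN⟩ := Sylow.exists_subgroup_card_pow_prime_le p
    (hn ▸ pow_dvd_pow p (n.sub_le 1)) H hm (Nat.le_sub_one_of_lt hmn)
  have hindex : N.index = p := by
    refine Nat.eq_of_mul_eq_mul_left (pow_pos hp.pos (n - 1)) ?_
    rw [← hN, Subgroup.card_mul_index, hn, hN, pow_sub_one_mul hmn.ne_bot]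
  refine ⟨N, Subgroup.normal_of_index_eq_minFac_card ?_, hindex, hHN⟩
  rw [hindex, hn, hp.pow_minFac hmn.ne_bot]

theorem eq_one_of_zpow_eq_one_of_card_eq_prime (hp : p.Prime) (hcard : Nat.card G = p) {n : ℤ}
    (hn : ¬ (p : ℤ) ∣ n) (h : a ^ n = 1) : a = 1 := by
  rw [← orderOf_eq_one_iff]
  refine ((Nat.dvd_prime hp).1 (hcard ▸ orderOf_dvd_natCard a)).resolve_right fun ha ↦ hn ?_
  rwa [← ha, orderOf_dvd_iff_zpow_eq_one]

theorem zpow_det_eq_one {A : Type*} [CommGroup A] {x y : A} {r s t u : ℤ}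
    (h₁ : x ^ r * y ^ s = 1) (h₂ : x ^ t * y ^ u = 1) : x ^ (r * u - s * t) = 1 := by
  calc x ^ (r * u - s * t) = (x ^ r * y ^ s) ^ u / (x ^ t * y ^ u) ^ s := by
        rw [mul_zpow, mul_zpow, ← zpow_mul, ← zpow_mul, ← zpow_mul, ← zpow_mul, mul_comm u s,
          mul_comm t s, mul_div_mul_right_eq_div, zpow_sub, div_eq_mul_inv]
    _ = 1 := by simp only [h₁, h₂, one_zpow, div_one]

theorem closure_zpow_mul_zpow_eq_top [Finite G] (hp : p.Prime) (hG : IsPGroup p G)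
    (hgen : Subgroup.closure {a, b} = ⊤) {r s t u : ℤ} (hdet : ¬ (p : ℤ) ∣ r * u - s * t) :
    Subgroup.closure {b ^ r * a ^ s, b ^ t * a ^ u} = ⊤ := by
  by_contra hne
  obtain ⟨N, hN, hindex, hle⟩ := exists_normal_index_eq_prime_of_ne_top hp hG hne
  have := Fact.mk hp
  have := isCyclic_of_prime_card hindex
  let _ := IsCyclic.commGroup (α := G ⧸ N)
  rw [Subgroup.closure_le, Set.pair_subset_iff] at hle
  have hx : (b : G ⧸ N) ^ r * (a : G ⧸ N) ^ s = 1 := (QuotientGroup.eq_one_iff _).2 hle.1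
  have hy : (b : G ⧸ N) ^ t * (a : G ⧸ N) ^ u = 1 := (QuotientGroup.eq_one_iff _).2 hle.2
  have hb : (b : G ⧸ N) = 1 :=
    eq_one_of_zpow_eq_one_of_card_eq_prime hp hindex hdet (zpow_det_eq_one hx hy)
  have ha : (a : G ⧸ N) = 1 := by
    rw [mul_comm] at hx hy
    refine eq_one_of_zpow_eq_one_of_card_eq_prime hp hindex ?_ (zpow_det_eq_one hx hy)
    rwa [dvd_sub_comm]
  rw [QuotientGroup.eq_one_iff] at ha hb
  have htop : N = ⊤ := by
    rw [eq_top_iff, ← hgen, Subgroup.closure_le, Set.pair_subset_iff]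
    exact ⟨ha, hb⟩
  rw [htop, Subgroup.index_top] at hindex
  exact hp.ne_one hindex.symm

end Group

namespace M2

variable {p d e f : ℕ}

theorem a_pow : M2a p d e f ^ p ^ d = 1 :=
  PresentedGroup.one_of_mem (rels := M2rels p d e f) (x := FreeGroup.of 0 ^ p ^ d)
    (by simp [M2rels])

theorem b_pow : M2b p d e f ^ p ^ e = 1 :=
  PresentedGroup.one_of_mem (rels := M2rels p d e f) (x := FreeGroup.of 1 ^ p ^ e)
    (by simp [M2rels])

theorem semiconjBy_b : SemiconjBy (M2b p d e f) (M2a p d e f ^ (1 + p ^ f)) (M2a p d e f) := by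
  have hconj : (M2b p d e f)⁻¹ * M2a p d e f * M2b p d e f = M2a p d e f ^ (1 + p ^ f) :=
    PresentedGroup.mk_eq_mk_of_mul_inv_mem (rels := M2rels p d e f)
      (x := (FreeGroup.of 1)⁻¹ * FreeGroup.of 0 * FreeGroup.of 1)
      (y := FreeGroup.of 0 ^ (1 + p ^ f)) (by simp [M2rels])
  rw [SemiconjBy, ← hconj, mul_assoc, mul_inv_cancel_left]

theorem closure_a_b : Subgroup.closure {M2a p d e f, M2b p d e f} = ⊤ := by
  rw [← PresentedGroup.closure_range_of (M2rels p d e f)]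
  congr 1
  ext g
  simp [M2a, M2b, Fin.exists_fin_two, eq_comm]

section Lift

variable {G : Type*} [Group G] {x y : G}

/-- The universal property of the presentation of `M₂(p,d,e,f)`: the homomorphism with `a ↦ x` and
`b ↦ y`, for `x` and `y` satisfying the defining relations. The conjugation relation
`y⁻¹ x y = x ^ (1 + p ^ f)` is expressed by `SemiconjBy`. -/
def lift (hx : x ^ p ^ d = 1) (hy : y ^ p ^ e = 1) (hxy : SemiconjBy y (x ^ (1 + p ^ f)) x) :
    M2 p d e f →* G :=
  PresentedGroup.toGroup (f := ![x, y]) <| by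
    rintro r (rfl | rfl | rfl)
    · simpa using hx
    · simpa using hy
    · suffices y⁻¹ * x * y * (x ^ (1 + p ^ f))⁻¹ = 1 by simpa using this
      rw [mul_inv_eq_one, mul_assoc, ← hxy.eq, inv_mul_cancel_left]

variable (hx : x ^ p ^ d = 1) (hy : y ^ p ^ e = 1) (hxy : SemiconjBy y (x ^ (1 + p ^ f)) x)

theorem lift_a : lift hx hy hxy (M2a p d e f) = x :=
  PresentedGroup.toGroup.of _

theorem lift_b : lift hx hy hxy (M2b p d e f) = y :=
  PresentedGroup.toGroup.of _

end Lift

theorem orderOf_a (hp : p.Prime) (hpf : f + 2 ≤ p * f) (hde : d ≤ e + f) :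
    orderOf (M2a p d e f) = p ^ d := by
  refine Nat.dvd_antisymm (orderOf_dvd_of_pow_eq_one a_pow) ?_
  have hk : ((1 + p ^ f : ℕ) : ZMod (p ^ d)) ^ p ^ e = 1 := by
    have h := (one_add_prime_pow_pow_modEq_one_iff hp hpf e (p ^ e)).2 dvd_rfl
    exact_mod_cast (ZMod.natCast_eq_natCast_iff _ _ _).2 (h.of_dvd (pow_dvd_pow p hde))
  -- `M₂` acts on `ℤ/pᵈ` by affine maps: `a` translates by `1`, `b` divides by `1 + p ^ f`.
  let v : (ZMod (p ^ d))ˣ := Units.ofPowEqOne _ _ hk (pow_pos hp.pos e).ne'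
  let φ : M2 p d e f →* Equiv.Perm (ZMod (p ^ d)) :=
    lift (x := Equiv.addRight 1) (y := MulAction.toPermHom _ _ v⁻¹)
      (orderOf_dvd_iff_pow_eq_one.1 (orderOf_addRight_one _).dvd)
      (by rw [← map_pow, inv_pow, Units.pow_ofPowEqOne, inv_one, map_one])
      (by
        ext z
        have hv : v⁻¹ • ((1 + p ^ f : ℕ) : ZMod (p ^ d)) = 1 := v.inv_mul
        simpa [smul_add] using hv)
  rw [← orderOf_addRight_one (p ^ d), ← lift_a (x := Equiv.addRight (1 : ZMod (p ^ d)))]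
  exact orderOf_map_dvd φ _

/-- The projection `M₂(p,d,e,f) → ⟨b⟩ ≅ ℤ/pᵉ` with kernel `⟨a⟩`, recording the exponent of `b`. -/
def bExponent : M2 p d e f →* Multiplicative (ZMod (p ^ e)) :=
  lift (x := 1) (y := Multiplicative.ofAdd 1) (one_pow _) (by rw [← ofAdd_nsmul]; simp)
    (by rw [one_pow]; exact SemiconjBy.one_right _)

theorem bExponent_zpow_mul_zpow (r s : ℤ) :
    bExponent (M2b p d e f ^ r * M2a p d e f ^ s) = Multiplicative.ofAdd (r : ZMod (p ^ e)) := by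
  rw [map_mul, map_zpow, map_zpow, bExponent, lift_a, lift_b, one_zpow, mul_one, ← ofAdd_zsmul,
    zsmul_one]

theorem pow_dvd_of_semiconjBy (hp : 0 < p) (hfe : f ≤ e) {r s : ℤ} {y : M2 p d e f}
    (h : SemiconjBy y ((M2b p d e f ^ r * M2a p d e f ^ s) ^ (1 + p ^ f))
      (M2b p d e f ^ r * M2a p d e f ^ s)) : (p : ℤ) ^ (e - f) ∣ r := by
  have hexp := h.map bExponent
  rw [SemiconjBy, mul_comm, mul_left_inj, pow_add, pow_one, map_mul, map_pow,
    mul_eq_left, bExponent_zpow_mul_zpow, ← ofAdd_nsmul, ofAdd_eq_one] at hexp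
  have hdvd : (p : ℤ) ^ (e - f) * p ^ f ∣ r * p ^ f := by
    rw [← pow_add, Nat.sub_add_cancel hfe, ← Nat.cast_pow, ← ZMod.intCast_zmod_eq_zero_iff_dvd]
    simpa [mul_comm] using hexp
  exact (mul_dvd_mul_iff_right (pow_ne_zero f (by exact_mod_cast hp.ne'))).1 hdvd

theorem commute_zpow_b_a_iff (hp : p.Prime) (hpf : f + 2 ≤ p * f) (hfd : f ≤ d) (hde : d ≤ e + f)
    (m : ℤ) : Commute (M2b p d e f ^ m) (M2a p d e f) ↔ (p : ℤ) ^ (d - f) ∣ m := by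
  have hnat (n : ℕ) : Commute (M2b p d e f ^ n) (M2a p d e f) ↔ (p : ℤ) ^ (d - f) ∣ n := by
    rw [commute_pow_left_iff_modEq semiconjBy_b, orderOf_a hp hpf hde, ← Nat.cast_pow,
      Int.natCast_dvd_natCast, ← one_add_prime_pow_pow_modEq_one_iff hp hpf,
      Nat.sub_add_cancel hfd]
  obtain ⟨n, rfl | rfl⟩ := m.eq_nat_or_neg
  · rw [zpow_natCast, hnat]
  · rw [zpow_neg, zpow_natCast, Commute.inv_left_iff, hnat, dvd_neg]

theorem zpow_b_mem_center_iff (hp : p.Prime) (hpf : f + 2 ≤ p * f) (hfd : f ≤ d)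
    (hde : d ≤ e + f) (m : ℤ) :
    M2b p d e f ^ m ∈ Subgroup.center (M2 p d e f) ↔ (p : ℤ) ^ (d - f) ∣ m := by
  rw [← commute_zpow_b_a_iff hp hpf hfd hde, Subgroup.center_eq_iInf closure_a_b]
  simpa [Subgroup.mem_centralizer_singleton_iff, commute_iff_eq] using
    fun _ ↦ ((Commute.refl (M2b p d e f)).zpow_left m).eq

theorem zpow_b_pow_prime_pow_eq_one {r : ℤ} {n : ℕ} (hr : (p : ℤ) ^ (e - f) ∣ r) (hn : f ≤ n) :
    (M2b p d e f ^ r) ^ p ^ n = 1 := by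
  obtain ⟨q, rfl⟩ := hr
  rw [← zpow_natCast, ← zpow_mul, ← orderOf_dvd_iff_zpow_eq_one]
  refine (Int.natCast_dvd_natCast.2 (orderOf_dvd_of_pow_eq_one b_pow)).trans ?_
  push_cast
  rw [mul_right_comm, ← pow_add]
  exact (pow_dvd_pow _ (by omega)).mul_right q

theorem image_a_pow_prime_pow (hp : p.Prime) (hpf : f + 2 ≤ p * f) (hfd : f ≤ d) (hde : d ≤ e)
    {r : ℤ} {n : ℕ} (hr : (p : ℤ) ^ (e - f) ∣ r) (hn : f ≤ n) (s : ℤ) :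
    (M2b p d e f ^ r * M2a p d e f ^ s) ^ p ^ n = (M2a p d e f ^ s) ^ p ^ n := by
  have hcomm : Commute (M2b p d e f ^ r) (M2a p d e f) :=
    (commute_zpow_b_a_iff hp hpf hfd (hde.trans (e.le_add_right f)) r).2
      ((pow_dvd_pow _ (Nat.sub_le_sub_right hde f)).trans hr)
  rw [(hcomm.zpow_right s).mul_pow, zpow_b_pow_prime_pow_eq_one hr hn, one_mul]

theorem semiconjBy_image_iff (hp : p.Prime) (hpf : f + 2 ≤ p * f) (hfd : f ≤ d) (hde : d ≤ e)
    {r s : ℤ} (hr : (p : ℤ) ^ (e - f) ∣ r) (hs : ¬ (p : ℤ) ∣ s) (t u : ℤ) :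
    SemiconjBy (M2b p d e f ^ t * M2a p d e f ^ u)
      ((M2b p d e f ^ r * M2a p d e f ^ s) ^ (1 + p ^ f)) (M2b p d e f ^ r * M2a p d e f ^ s) ↔
      (p : ℤ) ^ (d - f) ∣ t - 1 := by
  have hde' : d ≤ e + f := hde.trans (e.le_add_right f)
  have hcenter : M2b p d e f ^ r ∈ Subgroup.center (M2 p d e f) :=
    (zpow_b_mem_center_iff hp hpf hfd hde' r).2
      ((pow_dvd_pow _ (Nat.sub_le_sub_right hde f)).trans hr)
  have hpow : (M2b p d e f ^ r) ^ (1 + p ^ f) = M2b p d e f ^ r := by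
    rw [pow_add, pow_one, zpow_b_pow_prime_pow_eq_one hr le_rfl, mul_one]
  have hcoprime : IsCoprime s (orderOf (M2a p d e f) : ℤ) := by
    rw [orderOf_a hp hpf hde', Nat.cast_pow]
    exact ((Nat.prime_iff_prime_int.1 hp).coprime_iff_not_dvd.2 hs).symm.pow_right
  rw [semiconjBy_zpow_mul_zpow_iff semiconjBy_b hcenter hpow,
    commute_zpow_right_iff_of_isCoprime hcoprime, commute_zpow_b_a_iff hp hpf hfd hde']

theorem image_b_pow (hp : p.Prime) (hpf : f + 2 ≤ p * f) (hfd : f ≤ d) (hde : d ≤ e)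
    {t : ℤ} (ht : (p : ℤ) ^ (d - f) ∣ t - 1) (u : ℤ) :
    (M2b p d e f ^ t * M2a p d e f ^ u) ^ p ^ e = 1 := by
  have hcenter := (zpow_b_mem_center_iff hp hpf hfd (hde.trans (e.le_add_right f)) _).2 ht
  have hcomm : Commute (M2b p d e f ^ (t - 1)) (M2b p d e f * M2a p d e f ^ u) :=
    (Subgroup.mem_center_iff.1 hcenter _).symm
  have hsum : p ^ d ∣ ∑ i ∈ Finset.range (p ^ e), (1 + p ^ f) ^ i :=
    (pow_dvd_pow p hde).trans
      ((prime_pow_dvd_geom_sum_one_add_prime_pow_iff hp hpf e (p ^ e)).2 dvd_rfl)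
  have ha : (M2a p d e f ^ u) ^ ∑ i ∈ Finset.range (p ^ e), (1 + p ^ f) ^ i = 1 := by
    obtain ⟨q, hq⟩ := hsum
    rw [hq, pow_mul, zpow_pow_eq_one_of_pow_eq_one a_pow, one_pow]
  calc (M2b p d e f ^ t * M2a p d e f ^ u) ^ p ^ e
      = (M2b p d e f ^ (t - 1) * (M2b p d e f * M2a p d e f ^ u)) ^ p ^ e := by
        rw [← mul_assoc, ← zpow_add_one, sub_add_cancel]
    _ = 1 := by
        rw [hcomm.mul_pow, mul_zpow_pow_eq semiconjBy_b, ha, b_pow,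
          zpow_pow_eq_one_of_pow_eq_one b_pow, one_mul, one_mul]

theorem isOfFinOrder_a (hp : 0 < p) : IsOfFinOrder (M2a p d e f) :=
  isOfFinOrder_iff_pow_eq_one.2 ⟨p ^ d, pow_pos hp d, a_pow⟩

theorem isOfFinOrder_b (hp : 0 < p) : IsOfFinOrder (M2b p d e f) :=
  isOfFinOrder_iff_pow_eq_one.2 ⟨p ^ e, pow_pos hp e, b_pow⟩

theorem normal_zpowers_a (hp : 0 < p) : (Subgroup.zpowers (M2a p d e f)).Normal :=
  normal_zpowers_of_semiconjBy closure_a_b semiconjBy_b (isOfFinOrder_a hp)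

theorem zpowers_b_sup_zpowers_a :
    Subgroup.zpowers (M2b p d e f) ⊔ Subgroup.zpowers (M2a p d e f) = ⊤ := by
  rw [Subgroup.zpowers_eq_closure, Subgroup.zpowers_eq_closure, ← Subgroup.closure_union,
    ← closure_a_b, Set.union_comm, Set.singleton_union]

theorem finite (hp : 0 < p) : Finite (M2 p d e f) := by
  have : (Subgroup.zpowers (M2a p d e f)).Normal := normal_zpowers_a hp
  rw [← Set.finite_univ_iff, ← Subgroup.coe_top, ← zpowers_b_sup_zpowers_a, Subgroup.mul_normal]
  exact (finite_zpowers.2 (isOfFinOrder_b hp)).mul (finite_zpowers.2 (isOfFinOrder_a hp))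

theorem isPGroup (hp : 0 < p) : IsPGroup p (M2 p d e f) := by
  have : (Subgroup.zpowers (M2a p d e f)).Normal := normal_zpowers_a hp
  have ha : IsPGroup p (Subgroup.zpowers (M2a p d e f)) :=
    IsPGroup.of_card_dvd_pow ((Nat.card_zpowers _).dvd.trans (orderOf_dvd_of_pow_eq_one a_pow))
  have hb : IsPGroup p (Subgroup.zpowers (M2b p d e f)) :=
    IsPGroup.of_card_dvd_pow ((Nat.card_zpowers _).dvd.trans (orderOf_dvd_of_pow_eq_one b_pow))
  have h := hb.to_sup_of_normal_right ha
  rw [zpowers_b_sup_zpowers_a] at h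
  exact h.of_equiv Subgroup.topEquiv

theorem exists_mulAut (hp : 0 < p) {x y : M2 p d e f} (hx : x ^ p ^ d = 1) (hy : y ^ p ^ e = 1)
    (hxy : SemiconjBy y (x ^ (1 + p ^ f)) x) (hgen : Subgroup.closure {x, y} = ⊤) :
    ∃ φ : MulAut (M2 p d e f), φ (M2a p d e f) = x ∧ φ (M2b p d e f) = y := by
  have : Finite (M2 p d e f) := finite hp
  have hsurj : Function.Surjective (lift hx hy hxy) := by
    rw [← MonoidHom.range_eq_top, eq_top_iff, ← hgen, Subgroup.closure_le, Set.pair_subset_iff]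
    exact ⟨⟨_, lift_a hx hy hxy⟩, ⟨_, lift_b hx hy hxy⟩⟩
  exact ⟨MulEquiv.ofBijective _ hsurj.bijective_of_finite, lift_a hx hy hxy, lift_b hx hy hxy⟩

theorem not_dvd_of_orderOf_image_a (hp : p.Prime) (hpf : f + 2 ≤ p * f) (hfd : f < d)
    (hde : d ≤ e) {r s : ℤ} (hr : (p : ℤ) ^ (e - f) ∣ r)
    (horder : orderOf (M2b p d e f ^ r * M2a p d e f ^ s) = p ^ d) : ¬ (p : ℤ) ∣ s := by
  rintro ⟨q, rfl⟩
  have hpow : (M2b p d e f ^ r * M2a p d e f ^ (p * q)) ^ p ^ (d - 1) = 1 := by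
    rw [image_a_pow_prime_pow hp hpf hfd.le hde hr (Nat.le_sub_one_of_lt hfd), mul_comm,
      zpow_mul, zpow_natCast, ← pow_mul, mul_pow_sub_one (by omega),
      zpow_pow_eq_one_of_pow_eq_one a_pow]
  have hdvd := orderOf_dvd_of_pow_eq_one hpow
  rw [horder, Nat.pow_dvd_pow_iff_le_right hp.one_lt] at hdvd
  omega

theorem closure_images_eq_top (hp : p.Prime) {r s t : ℤ} (hr : (p : ℤ) ∣ r) (hs : ¬ (p : ℤ) ∣ s)
    (ht : (p : ℤ) ∣ t - 1) (u : ℤ) :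
    Subgroup.closure {M2b p d e f ^ r * M2a p d e f ^ s, M2b p d e f ^ t * M2a p d e f ^ u} =
      ⊤ := by
  have : Finite (M2 p d e f) := finite hp.pos
  refine closure_zpow_mul_zpow_eq_top hp (isPGroup hp.pos) closure_a_b fun hdet ↦ hs ?_
  have hs' : s = r * u - s * (t - 1) - (r * u - s * t) := by ring
  rw [hs']
  exact ((hr.mul_right u).sub (ht.mul_left s)).sub hdet

end M2

theorem stmt_13_general (p d e f : ℕ) (hp : p.Prime) (hf : 0 < f) (hpf : p = 2 → 1 < f)
    (hfd : f < d) (hde : d ≤ e) (r s t u : ℤ) :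
    (∃ φ : MulAut (M2 p d e f),
        φ (M2a p d e f) = M2b p d e f ^ r * M2a p d e f ^ s ∧
        φ (M2b p d e f) = M2b p d e f ^ t * M2a p d e f ^ u) ↔
      ((p : ℤ) ^ (e - f) ∣ r ∧ ¬ (p : ℤ) ∣ s ∧ (p : ℤ) ^ (d - f) ∣ (t - 1)) := by
  replace hpf : f + 2 ≤ p * f := by
    rcases hp.two_le.eq_or_lt with rfl | hp2
    · have := hpf rfl; omega
    · nlinarith
  constructor
  · rintro ⟨φ, ha, hb⟩
    have hrel := (M2.semiconjBy_b (p := p) (d := d) (e := e) (f := f)).map φ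
    have horder := φ.orderOf_eq (M2a p d e f)
    rw [map_pow, ha, hb] at hrel
    rw [ha, M2.orderOf_a hp hpf (by omega)] at horder
    have hr := M2.pow_dvd_of_semiconjBy hp.pos (hfd.le.trans hde) hrel
    have hs := M2.not_dvd_of_orderOf_image_a hp hpf hfd hde hr horder
    exact ⟨hr, hs, (M2.semiconjBy_image_iff hp hpf hfd.le hde hr hs t u).1 hrel⟩
  · rintro ⟨hr, hs, ht⟩
    refine M2.exists_mulAut hp.pos ?_ (M2.image_b_pow hp hpf hfd.le hde ht u)
      ((M2.semiconjBy_image_iff hp hpf hfd.le hde hr hs t u).2 ht)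
      (M2.closure_images_eq_top hp ((dvd_pow_self _ (by omega)).trans hr) hs
        ((dvd_pow_self _ (by omega)).trans ht) u)
    rw [M2.image_a_pow_prime_pow hp hpf hfd.le hde hr hfd.le,
      zpow_pow_eq_one_of_pow_eq_one M2.a_pow]

/-- For `G = M₂(p,d,e,f)` with `1 ≤ f < d < e`, canonical generators
`a, b`, and integers `r, s, t, u`, the assignment `a ↦ bʳaˢ, b ↦ bᵗaᵘ` extends to an
automorphism of `G` iff `r ≡ 0 (mod p^(e-f))`, `s ≢ 0 (mod p)` and `t ≡ 1 (mod p^(d-f))`. -/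
theorem stmt_13 (p d e f : ℕ) (hp : p.Prime) (hodd : Odd p)
    (hf : 0 < f) (hfd : f < d) (hde : d < e) (r s t u : ℤ) :
    (∃ φ : MulAut (M2 p d e f),
        φ (M2a p d e f) = M2b p d e f ^ r * M2a p d e f ^ s ∧
        φ (M2b p d e f) = M2b p d e f ^ t * M2a p d e f ^ u) ↔
      ((p : ℤ) ^ (e - f) ∣ r ∧ ¬ (p : ℤ) ∣ s ∧ (p : ℤ) ^ (d - f) ∣ (t - 1)) :=
  stmt_13_general p d e f hp hf (fun h ↦ absurd (h ▸ hodd) (by decide)) hfd hde.le r s t u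
end

section
/- Let p be an odd prime, let d, e, h, f be positive integers with h − d ≤ f < d < h < e, and let G = M₃(p,d,e,h,f) with canonical generators a, b. For integers r, t (taken modulo p^{d+e−h}) and s, u (taken modulo p^h), the assignment a ↦ bʳaˢ, b ↦ bᵗaᵘ extends to an automorphism of G if and only if r ≡ 0 (mod p^{d+e−h−f}), s ≡ 1 + u·p^{e−h} (mod p^{h−d}), t ≡ 1 (mod p^{d−f}), and r ≡ (t−1)·p^{e−h} (mod p^{e−f}). -/
/-!
Realize `G` as a quotient of `⟨a⟩ ⋊ ℤ` to see that `b ^ i * a ^ j` is a normal form, and write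
`c = 1 + p ^ f`, `d = f + α`, `h = d + δ`, `e = h + β`. An automorphism is the same thing as a
pair `x = b ^ r * a ^ s`, `y = b ^ t * a ^ u` that satisfies the defining relations and generates
`G`; by the Frattini argument it generates as soon as `!![s, r; u, t]` is invertible modulo `p`.

Since `p` is odd, `1 + c + ⋯ + c ^ (n - 1)` and `c ^ n` agree with `n` and `1 + p ^ f * n` to high
`p`-adic precision, so the relations become congruences. The one coming from conjugation forces
`r = p ^ (α + β) * k` and `t = 1 + p ^ α * m`. With `U = 1 + u * p ^ β`, the remaining conditions
are `s * m ≡ k * U` and `U + p ^ α * m ≡ s + p ^ α * k` modulo `p ^ δ`, which are equivalent to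
`k ≡ m` and `s ≡ U`.
-/

section Arithmetic

open Finset

lemma not_dvd_one_add {R : Type*} [CommRing R] {q x : R} (hq : ¬IsUnit q) (hx : q ∣ x) :
    ¬q ∣ 1 + x := fun h ↦ hq (isUnit_of_dvd_one ((dvd_add_left hx).1 h))

lemma geom_sum_mul_exponent {R : Type*} [CommSemiring R] (x : R) (m n : ℕ) :
    ∑ i ∈ range (m * n), x ^ i = (∑ i ∈ range m, x ^ i) * ∑ i ∈ range n, (x ^ m) ^ i := by
  induction n with
  | zero => simp
  | succ n ih =>
    rw [Nat.mul_succ, sum_range_add, ih, sum_range_succ, mul_add, sum_mul _ _ ((x ^ m) ^ n)]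
    simp only [pow_add, pow_mul, mul_comm]

lemma geom_sum_modEq_of_modEq_one {x q : ℤ} (hx : x ≡ 1 [ZMOD q]) (n : ℕ) :
    ∑ i ∈ range n, x ^ i ≡ n [ZMOD q] := by
  simpa using Int.ModEq.sum fun i (_ : i ∈ range n) ↦ hx.pow i

lemma geom_sum_modEq_of_odd {p : ℕ} (hodd : Odd p) {x q : ℤ} (hpq : (p : ℤ) ∣ q)
    (hx : x ≡ 1 [ZMOD q]) : ∑ i ∈ range p, x ^ i ≡ p [ZMOD q * p] := by
  obtain ⟨y, rfl⟩ := Int.modEq_iff_add_fac.1 hx.symm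
  have hpow (i : ℕ) : (1 + q * y) ^ i ≡ 1 + q * y * i [ZMOD q * p] := by
    obtain ⟨z, hz⟩ := Polynomial.powAddExpansion (1 : ℤ) (q * y) i
    refine (Int.modEq_iff_dvd.2 ?_).symm
    rw [hz]
    exact (mul_dvd_mul_left q hpq).trans ⟨z * y ^ 2, by ring⟩
  have hgauss : p ∣ ∑ i ∈ range p, i := by
    refine (Nat.coprime_two_right.2 hodd).dvd_of_dvd_mul_right ?_
    rw [sum_range_id_mul_two]
    exact dvd_mul_right _ _
  calc ∑ i ∈ range p, (1 + q * y) ^ i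
      ≡ ∑ i ∈ range p, (1 + q * y * i) [ZMOD q * p] := Int.ModEq.sum fun i _ ↦ hpow i
    _ = p + q * y * (∑ i ∈ range p, i : ℕ) := by simp [sum_add_distrib, mul_sum]
    _ ≡ p [ZMOD q * p] := by
      obtain ⟨z, hz⟩ := hgauss
      rw [hz]
      push_cast
      exact Int.modEq_iff_dvd.2 ⟨-(y * z), by ring⟩

lemma pow_modEq_one_of_dvd {p : ℕ} {x q : ℤ} (hpq : (p : ℤ) ∣ q) (hx : x ≡ 1 [ZMOD q]) :
    x ^ p ≡ 1 [ZMOD q * p] := by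
  have hsum : (p : ℤ) ∣ ∑ i ∈ range p, x ^ i :=
    Int.modEq_zero_iff_dvd.1 <|
      (geom_sum_modEq_of_modEq_one (hx.of_dvd hpq) p).trans (Int.modEq_zero_iff_dvd.2 dvd_rfl)
  refine (Int.modEq_iff_dvd.2 ?_).symm
  rw [← mul_geom_sum]
  exact mul_dvd_mul hx.symm.dvd hsum

theorem geom_sum_modEq_of_pow_dvd {p : ℕ} (hodd : Odd p) {g v n : ℕ} {x : ℤ} (hg : 0 < g)
    (hx : x ≡ 1 [ZMOD p ^ g]) (hn : p ^ v ∣ n) :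
    ∑ i ∈ range n, x ^ i ≡ n [ZMOD p ^ (v + g)] := by
  induction v generalizing g n x with
  | zero => simpa using geom_sum_modEq_of_modEq_one hx n
  | succ v ih =>
    obtain ⟨n, rfl⟩ := (dvd_pow_self p v.succ_ne_zero).trans hn
    have hvn : p ^ v ∣ n := Nat.dvd_of_mul_dvd_mul_left hodd.pos (pow_succ' p v ▸ hn)
    have hpg : (p : ℤ) ∣ p ^ g := dvd_pow_self _ hg.ne'
    have hxp : x ^ p ≡ 1 [ZMOD p ^ (g + 1)] := pow_modEq_one_of_dvd hpg hx
    have hinner : ∑ i ∈ range n, (x ^ p) ^ i ≡ n [ZMOD p ^ (v + (g + 1))] :=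
      ih g.succ_pos hxp hvn
    have houter : (∑ i ∈ range p, x ^ i) * n ≡ p * n [ZMOD p ^ (g + 1) * p ^ v] := by
      obtain ⟨k, rfl⟩ := hvn
      have := ((geom_sum_modEq_of_odd hodd hpg hx).mul_right' (c := (p : ℤ) ^ v)).mul_right k
      push_cast
      rwa [← mul_assoc, ← mul_assoc, pow_succ]
    rw [geom_sum_mul_exponent, show v + 1 + g = v + (g + 1) by ring]
    push_cast
    refine (hinner.mul_left _).trans ?_
    rwa [add_comm, pow_add]

theorem one_add_pow_pow_modEq {p : ℕ} (hodd : Odd p) {f v n : ℕ} (hf : 0 < f) (hn : p ^ v ∣ n) :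
    (1 + (p : ℤ) ^ f) ^ n ≡ 1 + p ^ f * n [ZMOD p ^ (f + (v + f))] := by
  have hsum := geom_sum_modEq_of_pow_dvd hodd hf (x := 1 + (p : ℤ) ^ f) (by simp) hn
  have hpow : (1 + (p : ℤ) ^ f) ^ n = 1 + p ^ f * ∑ i ∈ range n, (1 + (p : ℤ) ^ f) ^ i := by
    linear_combination -mul_geom_sum (1 + (p : ℤ) ^ f) n
  rw [hpow, pow_add]
  exact (hsum.mul_left' (c := (p : ℤ) ^ f)).add_left 1

lemma one_add_pow_pow_modEq_one {p : ℕ} (hodd : Odd p) {f v n : ℕ} (hf : 0 < f) (hn : p ^ v ∣ n) :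
    (1 + (p : ℤ) ^ f) ^ n ≡ 1 [ZMOD p ^ (f + v)] := by
  refine ((one_add_pow_pow_modEq hodd hf hn).of_dvd (pow_dvd_pow _ (by lia))).trans ?_
  rw [Int.add_modEq_left_iff, pow_add]
  exact mul_dvd_mul_left _ (by exact_mod_cast hn)

theorem pow_dvd_one_add_pow_pow_sub_one_iff {p : ℕ} (hp : p.Prime) (hodd : Odd p) {f : ℕ}
    (hf : 0 < f) (v n : ℕ) :
    (p : ℤ) ^ (f + v) ∣ (1 + (p : ℤ) ^ f) ^ n - 1 ↔ p ^ v ∣ n := by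
  have hpf : (p : ℤ) ∣ p ^ f := dvd_pow_self _ hf.ne'
  have hndvd : ¬(p : ℤ) ∣ 1 + p ^ f :=
    not_dvd_one_add (Nat.prime_iff_prime_int.1 hp).not_isUnit hpf
  have hlte := Int.emultiplicity_pow_sub_pow hp hodd (x := 1 + (p : ℤ) ^ f) (y := 1)
    (by simpa using hpf) hndvd n
  rw [one_pow, add_sub_cancel_left, emultiplicity_pow_self_of_prime
    (Nat.prime_iff_prime_int.1 hp)] at hlte
  rw [pow_dvd_iff_le_emultiplicity, pow_dvd_iff_le_emultiplicity, hlte, Nat.cast_add,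
    ENat.add_le_add_iff_left (ENat.natCast_ne_top f)]

variable {p f α δ : ℕ} {s U : ℤ}

lemma pow_dvd_of_mul_one_add_pow_modEq (hp : p.Prime) (hodd : Odd p) (hf : 0 < f)
    (hs : ¬(p : ℤ) ∣ s) {t : ℕ} {k : ℤ}
    (h : s * (1 + p ^ f) ^ (t + 1) ≡ s * (1 + p ^ f) + p ^ (f + α) * k [ZMOD p ^ (f + α)]) :
    p ^ α ∣ t := by
  have hprime : Prime (p : ℤ) := Nat.prime_iff_prime_int.1 hp
  have hc : ¬(p : ℤ) ∣ 1 + p ^ f := not_dvd_one_add hprime.not_isUnit (dvd_pow_self _ hf.ne')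
  have hsc : ¬(p : ℤ) ∣ s * (1 + p ^ f) := fun hdvd ↦ (hprime.dvd_or_dvd hdvd).elim hs hc
  refine (pow_dvd_one_add_pow_pow_sub_one_iff hp hodd hf α t).1 <|
    hprime.pow_dvd_of_dvd_mul_left _ hsc ?_
  obtain ⟨z, hz⟩ := h.symm.dvd
  exact ⟨z + k, by linear_combination hz⟩

lemma mul_one_add_pow_modEq_iff (hodd : Odd p) (hf : 0 < f) (hδ : δ ≤ f) (m : ℕ) (k : ℤ) :
    s * (1 + p ^ f) ^ (p ^ α * m + 1) ≡ s * (1 + p ^ f) + p ^ (f + α) * k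
      [ZMOD p ^ (f + α + δ)] ↔ s * m ≡ k [ZMOD p ^ δ] := by
  have hpow : (1 + (p : ℤ) ^ f) ^ (p ^ α * m) ≡ 1 + p ^ f * (p ^ α * m) [ZMOD p ^ (f + α + δ)] := by
    exact_mod_cast (one_add_pow_pow_modEq hodd hf (dvd_mul_right (p ^ α) m)).of_dvd
      (pow_dvd_pow _ (by lia))
  have hleft : s * (1 + p ^ f) ^ (p ^ α * m + 1) ≡
      s * (1 + p ^ f) + p ^ (f + α) * (s * m * (1 + p ^ f)) [ZMOD p ^ (f + α + δ)] := by
    convert hpow.mul_left (s * (1 + p ^ f)) using 1 <;> ring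
  have hunit : s * m * (1 + p ^ f) ≡ s * m [ZMOD p ^ δ] := by
    rw [mul_one_add, Int.add_modEq_left_iff]
    exact (pow_dvd_pow _ hδ).mul_left _
  calc
    _ ↔ p ^ (f + α) * (s * m * (1 + p ^ f)) ≡ p ^ (f + α) * k [ZMOD p ^ (f + α) * p ^ δ] := by
      rw [← pow_add]
      exact ⟨fun h ↦ Int.ModEq.add_left_cancel' _ (hleft.symm.trans h),
        fun h ↦ hleft.trans (h.add_left _)⟩
    _ ↔ s * m * (1 + p ^ f) ≡ k [ZMOD p ^ δ] :=
      Int.ModEq.mul_left_cancel_iff' (pow_ne_zero _ (by exact_mod_cast hodd.pos.ne'))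
    _ ↔ s * m ≡ k [ZMOD p ^ δ] := ⟨hunit.symm.trans, hunit.trans⟩

lemma mul_modEq_and_modEq_iff (hp : p.Prime) (hα : 0 < α) (hU : ¬(p : ℤ) ∣ U) (m k : ℤ) :
    s * m ≡ k * U [ZMOD p ^ δ] ∧ U + p ^ α * m ≡ s + p ^ α * k [ZMOD p ^ δ] ↔
      k ≡ m [ZMOD p ^ δ] ∧ s ≡ U [ZMOD p ^ δ] := by
  have hprime : Prime (p : ℤ) := Nat.prime_iff_prime_int.1 hp
  have hunit : ¬(p : ℤ) ∣ U + p ^ α * m := fun h ↦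
    hU ((dvd_add_left ((dvd_pow_self _ hα.ne').mul_right m)).1 h)
  constructor
  · rintro ⟨hmul, hadd⟩
    have hprod : (p : ℤ) ^ δ ∣ (U + p ^ α * m) * (m - k) := by
      obtain ⟨y, hy⟩ := hmul.dvd
      obtain ⟨z, hz⟩ := hadd.symm.dvd
      exact ⟨m * z - y, by linear_combination m * hz - hy⟩
    have hkm : k ≡ m [ZMOD p ^ δ] :=
      Int.modEq_iff_dvd.2 (hprime.pow_dvd_of_dvd_mul_left _ hunit hprod)
    exact ⟨hkm, (((hkm.mul_left _).add_left s).symm.trans hadd.symm).add_right_cancel' _⟩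
  · rintro ⟨hkm, hsU⟩
    exact ⟨by simpa only [mul_comm] using hsU.mul hkm.symm, hsU.symm.add (hkm.symm.mul_left _)⟩

end Arithmetic

section Words

variable {G : Type*} [Group G] {a b : G} {c : ℕ}

lemma zpow_mul_pow_of_semiconjBy (hab : SemiconjBy b (a ^ c) a) (j : ℤ) (k : ℕ) :
    a ^ j * b ^ k = b ^ k * a ^ (j * (c : ℤ) ^ k) := by
  induction k generalizing j with
  | zero => simp
  | succ k ih =>
    have hb : a ^ j * b = b * a ^ (j * c) := by
      rw [mul_comm j, zpow_mul, zpow_natCast, (hab.zpow_right j).eq]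
    rw [pow_succ', ← mul_assoc, hb, mul_assoc, ih, mul_assoc j, ← pow_succ' (c : ℤ), ← mul_assoc b]

lemma word_mul_word (hab : SemiconjBy b (a ^ c) a) (i k : ℕ) (j l : ℤ) :
    b ^ i * a ^ j * (b ^ k * a ^ l) = b ^ (i + k) * a ^ (j * (c : ℤ) ^ k + l) := by
  rw [mul_assoc, ← mul_assoc (a ^ j), zpow_mul_pow_of_semiconjBy hab, pow_add, zpow_add,
    mul_assoc, mul_assoc]

lemma word_pow (hab : SemiconjBy b (a ^ c) a) (i n : ℕ) (j : ℤ) :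
    (b ^ i * a ^ j) ^ n = b ^ (i * n) * a ^ (j * ∑ x ∈ Finset.range n, ((c : ℤ) ^ i) ^ x) := by
  induction n with
  | zero => simp
  | succ n ih =>
    rw [pow_succ, ih, word_mul_word hab, geom_sum_succ, Nat.mul_succ]
    congr 2
    ring

end Words

lemma exists_pow_eq_zpow_of_pow_eq_one {G : Type*} [Group G] {g : G} {N : ℕ} (hN : N ≠ 0)
    (hg : g ^ N = 1) (i : ℤ) : ∃ n : ℕ, g ^ n = g ^ i ∧ (N : ℤ) ∣ i - n := by
  have hmod : ((i % N).toNat : ℤ) = i % N :=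
    Int.toNat_of_nonneg (i.emod_nonneg (by exact_mod_cast hN))
  refine ⟨(i % N).toNat, ?_, ?_⟩
  · rw [← zpow_natCast, hmod, ← zpow_eq_zpow_emod' i hg]
  · rw [hmod]
    exact Int.dvd_self_sub_emod

universe u

section CyclicExtension

lemma normal_zpowers_of_mem_center {G : Type*} [Group G] {z : G} (hz : z ∈ Subgroup.center G) :
    (Subgroup.zpowers z).Normal := by
  refine ⟨fun w hw g ↦ ?_⟩
  rw [Subgroup.mem_center_iff.1 (Subgroup.zpowers_le.2 hz hw) g, mul_inv_cancel_right]
  exact hw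

open SemidirectProduct in
theorem exists_cyclic_extension {A : Type u} [Group A] {ψ : MulAut A} {x : A} {n : ℕ}
    (hx : ψ x = x) (hn : ψ ^ n = MulAut.conj x) :
    ∃ (G : Type u) (_ : Group G) (ι : A →* G) (b : G), b ^ n = ι x ∧
      (∀ y, b * ι y = ι (ψ y) * b) ∧
      ∀ (i : ℤ) (y : A), b ^ i * ι y = 1 → ∃ l : ℤ, i = n * l ∧ y = x ^ (-l) := by
  let θ : Multiplicative ℤ →* MulAut A := zpowersHom _ ψ
  let β : A ⋊[θ] Multiplicative ℤ := inr (.ofAdd 1)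
  -- Killing the central element `z` imposes `β ^ n = x`.
  let z : A ⋊[θ] Multiplicative ℤ := inl x⁻¹ * β ^ n
  have hβ (y : A) : β * inl y = inl (ψ y) * β := by
    ext <;> simp [β, θ]
  have hβn (y : A) : β ^ n * inl y = inl (x * y * x⁻¹) * β ^ n := by
    ext <;> simp [β, θ, hn, ← map_pow, ← ofAdd_nsmul]
  have hβx : Commute (inl x⁻¹) β := ((hβ x⁻¹).trans (by rw [map_inv, hx])).symm
  have hz : z ∈ Subgroup.center (A ⋊[θ] Multiplicative ℤ) := by
    have hzinl (y : A) : Commute (inl y) z := by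
      simp [Commute, SemiconjBy, z, mul_assoc, hβn]
    have hzβ : Commute β z := hβx.symm.mul_right (Commute.self_pow β n)
    refine Subgroup.mem_center_iff.2 fun g ↦ ?_
    have hg : inr g.right = β ^ g.right.toAdd := by
      simp [β, ← map_zpow, ← ofAdd_zsmul]
    rw [← inl_left_mul_inr_right g, hg]
    exact (hzinl _).mul_left (hzβ.zpow_left _)
  have := normal_zpowers_of_mem_center hz
  refine ⟨_ ⧸ Subgroup.zpowers z, inferInstance, (QuotientGroup.mk' _).comp inl, β, ?_, ?_, ?_⟩
  · refine (QuotientGroup.eq.2 ?_).symm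
    rw [← map_inv]
    exact Subgroup.mem_zpowers z
  · exact fun y ↦ congrArg (QuotientGroup.mk' _) (hβ y)
  · intro i y h
    obtain ⟨l, hl⟩ := Subgroup.mem_zpowers_iff.1 ((QuotientGroup.eq_one_iff (β ^ i * inl y)).1 h)
    have hzl : z ^ l = β ^ (n * l) * inl (x ^ (-l)) := by
      rw [(hβx.pow_right n).mul_zpow l, ((hβx.pow_right n).zpow_zpow l l).eq, zpow_mul,
        zpow_natCast, zpow_neg, ← inv_zpow, map_zpow]
    have hright (j : ℤ) (w : A) : (β ^ j * inl w).right = .ofAdd j := by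
      simp [β, ← map_zpow, ← ofAdd_zsmul]
    have hi : i = n * l := by
      apply Multiplicative.ofAdd.injective
      rw [← hright i y, ← hl, hzl, hright]
    refine ⟨l, hi, inl_injective <| mul_left_cancel (a := β ^ i) ?_⟩
    rw [← hl, hzl, hi]

end CyclicExtension

/-- The elements `a`, `b` satisfy the relations `a ^ m = 1`, `b ^ n = a ^ k`, `b⁻¹ * a * b = a ^ c`
that present a metacyclic group; the last one is written without inverses. -/
structure MetacyclicRelations {G : Type*} [Group G] (m n k c : ℕ) (a b : G) : Prop where
  pow_left : a ^ m = 1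
  pow_right : b ^ n = a ^ k
  semiconjBy : SemiconjBy b (a ^ c) a

/-- Every relation `b ^ i * a ^ j = 1` between `a` and `b` is a consequence of the defining
relations `a ^ m = 1` and `b ^ n = a ^ k`. For `n ≠ 0` this says that the words `b ^ i * a ^ j` with
`0 ≤ i < n` and `j` modulo `m` are distinct. -/
structure MetacyclicNormalForm {G : Type*} [Group G] (m n k c : ℕ) (a b : G) : Prop
    extends MetacyclicRelations m n k c a b where
  exists_of_word_eq_one : ∀ i j : ℤ, b ^ i * a ^ j = 1 → ∃ l : ℤ, i = n * l ∧ (m : ℤ) ∣ j + k * l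

theorem exists_metacyclicNormalForm {m n k c : ℕ} (hn : n ≠ 0) (hcn : c ^ n ≡ 1 [MOD m])
    (hck : c * k ≡ k [MOD m]) :
    ∃ (G : Type) (_ : Group G) (a b : G), MetacyclicNormalForm m n k c a b := by
  have hcn' : (c : ZMod m) ^ n = 1 := by exact_mod_cast (ZMod.natCast_eq_natCast_iff _ _ _).2 hcn
  have hck' : (c : ZMod m) * k = k := by exact_mod_cast (ZMod.natCast_eq_natCast_iff _ _ _).2 hck
  let γ : (ZMod m)ˣ := Units.ofPowEqOne (c : ZMod m) n hcn' hn
  let ψ : MulAut (Multiplicative (ZMod m)) := AddEquiv.toMultiplicative (AddAut.mulLeft γ⁻¹)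
  have hψ (x : ZMod m) : ψ (.ofAdd (c * x)) = .ofAdd x :=
    congrArg Multiplicative.ofAdd (inv_smul_smul γ x)
  have hψx : ψ (.ofAdd (k : ZMod m)) = .ofAdd (k : ZMod m) := by
    rw [← congrArg Multiplicative.ofAdd hck', hψ, hck']
  have hψpow (i : ℕ) (x : ZMod m) : (ψ ^ i) (.ofAdd (c ^ i * x)) = .ofAdd x := by
    induction i with
    | zero => simp
    | succ i ih => rw [pow_succ, MulAut.mul_apply, pow_succ', mul_assoc, hψ, ih]
  have hψn : ψ ^ n = MulAut.conj (.ofAdd (k : ZMod m)) := by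
    ext x
    simpa [hcn'] using hψpow n x.toAdd
  obtain ⟨G, _, ι, b, hb, hconj, hword⟩ := exists_cyclic_extension hψx hψn
  have hι (j : ℤ) : ι (.ofAdd 1) ^ j = ι (.ofAdd (j : ZMod m)) := by
    rw [← map_zpow, ← ofAdd_zsmul, zsmul_one]
  refine ⟨G, inferInstance, ι (.ofAdd 1), b, ⟨?_, ?_, ?_⟩, fun i j h ↦ ?_⟩
  · simpa using hι m
  · simpa [hb] using (hι k).symm
  · rw [SemiconjBy, ← zpow_natCast, hι, Int.cast_natCast, hconj, ← mul_one (c : ZMod m), hψ]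
  · rw [hι] at h
    obtain ⟨l, hl, hj⟩ := hword i _ h
    refine ⟨l, hl, (ZMod.intCast_zmod_eq_zero_iff_dvd _ m).1 ?_⟩
    have hj' : (j : ZMod m) = -l * k := by
      simpa [← ofAdd_nsmul] using congrArg Multiplicative.toAdd hj
    push_cast
    rw [hj']
    ring

namespace MetacyclicNormalForm

variable {G : Type*} [Group G] {m n k c : ℕ} {a b : G}

lemma zpow_eq_one_iff (H : MetacyclicNormalForm m n k c a b) (hn : n ≠ 0) (j : ℤ) :
    a ^ j = 1 ↔ (m : ℤ) ∣ j := by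
  refine ⟨fun h ↦ ?_, fun ⟨l, hl⟩ ↦ ?_⟩
  · obtain ⟨l, hl, hj⟩ := H.exists_of_word_eq_one 0 j (by rwa [zpow_zero, one_mul])
    obtain rfl : l = 0 := by simpa [hn] using hl.symm
    simpa using hj
  · rw [hl, zpow_mul, zpow_natCast, H.pow_left, one_zpow]

lemma zpow_eq_zpow_iff (H : MetacyclicNormalForm m n k c a b) (hn : n ≠ 0) (i j : ℤ) :
    a ^ i = a ^ j ↔ i ≡ j [ZMOD m] := by
  rw [eq_comm, ← mul_inv_eq_one, ← zpow_sub, H.zpow_eq_one_iff hn, Int.modEq_iff_dvd]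

lemma dvd_sub_of_word_eq_word (H : MetacyclicNormalForm m n k c a b) {i i' j j' : ℤ}
    (h : b ^ i * a ^ j = b ^ i' * a ^ j') : (n : ℤ) ∣ i - i' := by
  obtain ⟨l, hl, -⟩ := H.exists_of_word_eq_one (i - i') (j - j') <| by
    rw [sub_eq_neg_add, zpow_add, zpow_sub, mul_assoc, ← mul_assoc (b ^ i), h]
    simp
  exact ⟨l, hl⟩

end MetacyclicNormalForm

namespace MetacyclicRelations

variable {G : Type*} [Group G] {m n k c : ℕ} {a b : G}

lemma map {G' : Type*} [Group G'] (H : MetacyclicRelations m n k c a b) (φ : G →* G') :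
    MetacyclicRelations m n k c (φ a) (φ b) where
  pow_left := by rw [← map_pow, H.pow_left, map_one]
  pow_right := by rw [← map_pow, H.pow_right, map_pow]
  semiconjBy := by simpa using H.semiconjBy.map φ

lemma pow_right_mul_eq_one (H : MetacyclicRelations m n k c a b) {q : ℕ} (hq : m ∣ k * q) :
    b ^ (n * q) = 1 := by
  obtain ⟨l, hl⟩ := hq
  rw [pow_mul, H.pow_right, ← pow_mul, hl, pow_mul, H.pow_left, one_pow]

lemma isOfFinOrder_left (H : MetacyclicRelations m n k c a b) (hm : m ≠ 0) : IsOfFinOrder a :=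
  isOfFinOrder_iff_pow_eq_one.2 ⟨m, Nat.pos_of_ne_zero hm, H.pow_left⟩

lemma isOfFinOrder_right (H : MetacyclicRelations m n k c a b) (hm : m ≠ 0) (hn : n ≠ 0) :
    IsOfFinOrder b :=
  isOfFinOrder_iff_pow_eq_one.2
    ⟨n * m, Nat.pos_of_ne_zero (mul_ne_zero hn hm), H.pow_right_mul_eq_one (dvd_mul_left m k)⟩

lemma exists_eq_word (H : MetacyclicRelations m n k c a b) (hm : m ≠ 0) (hn : n ≠ 0)
    (hgen : Subgroup.closure {a, b} = ⊤) (g : G) : ∃ (i : ℕ) (j : ℤ), g = b ^ i * a ^ j := by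
  have hfin : ∀ x ∈ ({a, b} : Set G), IsOfFinOrder x := by
    rintro x (rfl | rfl)
    exacts [H.isOfFinOrder_left hm, H.isOfFinOrder_right hm hn]
  have hg : g ∈ Submonoid.closure {a, b} := by
    rw [← Subgroup.closure_toSubmonoid_of_isOfFinOrder hfin, hgen]
    trivial
  induction hg using Submonoid.closure_induction with
  | mem x hx =>
    obtain rfl | rfl := hx
    exacts [⟨0, 1, by simp⟩, ⟨1, 0, by simp⟩]
  | one => exact ⟨0, 0, by simp⟩
  | mul x y _ _ hx hy =>
    obtain ⟨i, j, rfl⟩ := hx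
    obtain ⟨i', j', rfl⟩ := hy
    exact ⟨_, _, word_mul_word H.semiconjBy i i' j j'⟩

lemma zpow_eq_zpow_of_modEq (H : MetacyclicRelations m n k c a b) {i j : ℤ}
    (hij : i ≡ j [ZMOD m]) : a ^ i = a ^ j :=
  zpow_eq_zpow_iff_modEq.2 <| hij.of_dvd <| by exact_mod_cast orderOf_dvd_of_pow_eq_one H.pow_left

lemma word_pow_prime_pow {p M g v i : ℕ} (H : MetacyclicRelations (p ^ M) n k c a b)
    (hodd : Odd p) (hg : 0 < g) (hc : (c : ℤ) ^ i ≡ 1 [ZMOD p ^ g]) (hM : M ≤ v + g) (j : ℤ) :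
    (b ^ i * a ^ j) ^ p ^ v = b ^ (i * p ^ v) * a ^ (j * p ^ v) := by
  have hsum := (geom_sum_modEq_of_pow_dvd hodd hg hc (dvd_refl (p ^ v))).of_dvd (pow_dvd_pow _ hM)
  rw [word_pow H.semiconjBy]
  congr 1
  exact H.zpow_eq_zpow_of_modEq (by exact_mod_cast hsum.mul_left j)

lemma finite (H : MetacyclicRelations m n k c a b) (hm : m ≠ 0) (hn : n ≠ 0)
    (hgen : Subgroup.closure {a, b} = ⊤) : Finite G := by
  refine Set.finite_univ_iff.1 <| ((finite_zpowers.2 (H.isOfFinOrder_right hm hn)).mul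
    (finite_zpowers.2 (H.isOfFinOrder_left hm))).subset fun g _ ↦ ?_
  obtain ⟨i, j, rfl⟩ := H.exists_eq_word hm hn hgen g
  exact Set.mul_mem_mul (Subgroup.npow_mem_zpowers b i) (Subgroup.zpow_mem_zpowers a j)

lemma pow_mul_eq_one (H : MetacyclicRelations m n k c a b) (hm : m ≠ 0) (hn : n ≠ 0)
    (hgen : Subgroup.closure {a, b} = ⊤) (g : G) : g ^ (n * m) = 1 := by
  obtain ⟨i, j, rfl⟩ := H.exists_eq_word hm hn hgen g
  rw [pow_mul, word_pow H.semiconjBy, mul_comm i, pow_mul, H.pow_right, ← pow_mul,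
    ← zpow_natCast a (k * i), ← zpow_add, ← zpow_natCast _ m, zpow_comm, zpow_natCast, H.pow_left,
    one_zpow]

end MetacyclicRelations

lemma MetacyclicNormalForm.of_map {G G' : Type*} [Group G] [Group G'] {m n k c : ℕ} {a b : G}
    {φ : G →* G'} (H : MetacyclicRelations m n k c a b)
    (Hφ : MetacyclicNormalForm m n k c (φ a) (φ b)) : MetacyclicNormalForm m n k c a b where
  toMetacyclicRelations := H
  exists_of_word_eq_one i j h := Hφ.exists_of_word_eq_one i j <| by
    rw [← map_zpow, ← map_zpow, ← map_mul, h, map_one]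

namespace M3

variable (p d e h f : ℕ)

lemma metacyclicRelations :
    MetacyclicRelations (p ^ h) (p ^ (d + e - h)) (p ^ d) (1 + p ^ f)
      (M3a p d e h f) (M3b p d e h f) where
  pow_left := PresentedGroup.one_of_mem (rels := M3rels p d e h f) (by simp [M3rels])
  pow_right := mul_inv_eq_one.1 <|
    PresentedGroup.one_of_mem (rels := M3rels p d e h f)
      (x := FreeGroup.of 1 ^ p ^ (d + e - h) * (FreeGroup.of 0 ^ p ^ d)⁻¹) (by simp [M3rels])
  semiconjBy := by
    have hrel : (M3b p d e h f)⁻¹ * M3a p d e h f * M3b p d e h f * (M3a p d e h f ^ (1 + p ^ f))⁻¹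
        = 1 :=
      PresentedGroup.one_of_mem (rels := M3rels p d e h f)
        (x := (FreeGroup.of 1)⁻¹ * FreeGroup.of 0 * FreeGroup.of 1 *
          (FreeGroup.of 0 ^ (1 + p ^ f))⁻¹) (by simp [M3rels])
    rw [mul_inv_eq_one, mul_assoc] at hrel
    exact (inv_mul_eq_iff_eq_mul.1 hrel).symm

lemma closure_generators : Subgroup.closure {M3a p d e h f, M3b p d e h f} = ⊤ := by
  rw [← PresentedGroup.closure_range_of (M3rels p d e h f)]
  congr 1
  ext x
  simp [Fin.exists_fin_two, M3a, M3b, eq_comm]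

variable {p d e h f}

lemma exists_hom {G : Type*} [Group G] {x y : G}
    (H : MetacyclicRelations (p ^ h) (p ^ (d + e - h)) (p ^ d) (1 + p ^ f) x y) :
    ∃ φ : M3 p d e h f →* G, φ (M3a p d e h f) = x ∧ φ (M3b p d e h f) = y := by
  have hconj : y⁻¹ * x * y = x ^ (1 + p ^ f) := by
    rw [mul_assoc, inv_mul_eq_iff_eq_mul, H.semiconjBy.eq]
  have hrels : ∀ w ∈ M3rels p d e h f, FreeGroup.lift ![x, y] w = 1 := by
    rintro w (rfl | rfl | rfl)
    · simp [H.pow_left]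
    · simp [H.pow_right]
    · simp [hconj]
  exact ⟨PresentedGroup.toGroup hrels, PresentedGroup.toGroup.of hrels,
    PresentedGroup.toGroup.of hrels⟩

theorem metacyclicNormalForm (hodd : Odd p) (hf : 0 < f) (hhd : h ≤ d + f)
    (hhe : h ≤ d + e - h + f) :
    MetacyclicNormalForm (p ^ h) (p ^ (d + e - h)) (p ^ d) (1 + p ^ f)
      (M3a p d e h f) (M3b p d e h f) := by
  have hcn : (1 + p ^ f) ^ p ^ (d + e - h) ≡ 1 [MOD p ^ h] := by
    rw [← Int.natCast_modEq_iff]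
    exact_mod_cast (one_add_pow_pow_modEq_one hodd hf (dvd_refl (p ^ (d + e - h)))).of_dvd
      (pow_dvd_pow _ (by lia))
  have hck : (1 + p ^ f) * p ^ d ≡ p ^ d [MOD p ^ h] := by
    rw [add_mul, one_mul, ← pow_add, Nat.add_modEq_left_iff]
    exact pow_dvd_pow p (by lia)
  obtain ⟨G, _, x, y, Hxy⟩ := exists_metacyclicNormalForm (pow_ne_zero _ hodd.pos.ne') hcn hck
  obtain ⟨φ, rfl, rfl⟩ := exists_hom Hxy.toMetacyclicRelations
  exact .of_map (metacyclicRelations p d e h f) Hxy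

lemma M3b_pow_eq_one (hdh : d ≤ h) (hhe : h ≤ d + e) : M3b p d e h f ^ p ^ e = 1 := by
  have hpow := (metacyclicRelations p d e h f).pow_right_mul_eq_one (q := p ^ (h - d))
    (pow_add p d _ ▸ pow_dvd_pow p (by lia))
  rwa [← pow_add, show d + e - h + (h - d) = e by lia] at hpow

lemma exists_pow_eq_zpow (hp : p ≠ 0) (hdh : d ≤ h) (hhe : h ≤ d + e) (i : ℤ) :
    ∃ n : ℕ, M3b p d e h f ^ n = M3b p d e h f ^ i ∧ (p : ℤ) ^ e ∣ i - n := by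
  exact_mod_cast exists_pow_eq_zpow_of_pow_eq_one (pow_ne_zero e hp) (M3b_pow_eq_one hdh hhe) i

lemma finite (hp : p ≠ 0) : Finite (M3 p d e h f) :=
  (metacyclicRelations p d e h f).finite (pow_ne_zero _ hp) (pow_ne_zero _ hp)
    (closure_generators p d e h f)

lemma isPGroup (hp : p ≠ 0) : IsPGroup p (M3 p d e h f) := fun g ↦
  ⟨d + e - h + h, pow_add p _ _ ▸ (metacyclicRelations p d e h f).pow_mul_eq_one
    (pow_ne_zero _ hp) (pow_ne_zero _ hp) (closure_generators p d e h f) g⟩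

lemma exists_mulAut_of_closure_eq_top (hp : p ≠ 0) {x y : M3 p d e h f}
    (H : MetacyclicRelations (p ^ h) (p ^ (d + e - h)) (p ^ d) (1 + p ^ f) x y)
    (hgen : Subgroup.closure {x, y} = ⊤) :
    ∃ φ : MulAut (M3 p d e h f), φ (M3a p d e h f) = x ∧ φ (M3b p d e h f) = y := by
  have := finite (d := d) (e := e) (h := h) (f := f) hp
  obtain ⟨φ, hx, hy⟩ := exists_hom H
  have hsurj : Function.Surjective φ := by
    rw [← MonoidHom.range_eq_top, eq_top_iff, ← hgen, Subgroup.closure_le]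
    rintro _ (rfl | rfl)
    exacts [⟨_, hx⟩, ⟨_, hy⟩]
  exact ⟨MulEquiv.ofBijective φ (hsurj.bijective_of_finite), hx, hy⟩

end M3

section PGroup

variable {G : Type*} [Group G] {p : ℕ} [Fact p.Prime]

lemma zpow_mem_iff_of_not_dvd (hG : IsPGroup p G) {K : Subgroup G} {n : ℤ} (hn : ¬(p : ℤ) ∣ n)
    {g : G} : g ^ n ∈ K ↔ g ∈ K := by
  refine ⟨fun hgn ↦ ?_, fun hg ↦ K.zpow_mem hg n⟩
  have hcop : p.Coprime n.natAbs :=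
    ((Fact.out : p.Prime).coprime_iff_not_dvd).2 (mt Int.natCast_dvd.2 hn)
  have hg : g ∈ Subgroup.zpowers (g ^ n) :=
    mem_zpowers_zpow_iff.2 (hG.orderOf_coprime hcop g).symm
  exact Subgroup.zpowers_le.2 hgn hg

variable [Finite G]

lemma pow_mem_frattini (hG : IsPGroup p G) (g : G) : g ^ p ∈ frattini G := by
  refine Subgroup.mem_iInf.2 fun K ↦ Subgroup.mem_iInf.2 fun hK ↦ ?_
  by_contra hgp
  have := hG.isNilpotent
  have : K.Normal := Subgroup.NormalizerCondition.normal_of_coatom K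
    Group.normalizerCondition_of_isNilpotent hK
  have hsup : Subgroup.zpowers (g ^ p) ⊔ K = ⊤ :=
    hK.2 _ (right_lt_sup.2 fun hle ↦ hgp (hle (Subgroup.mem_zpowers _)))
  obtain ⟨_, ⟨i, rfl⟩, z, hz, hg⟩ := Subgroup.mem_sup_of_normal_right.1 (hsup ▸ Subgroup.mem_top g)
  have hzg : z = g ^ (1 - p * i) := by
    rw [← eq_inv_mul_iff_mul_eq] at hg
    rw [hg, sub_eq_neg_add, zpow_add, zpow_neg, zpow_mul, zpow_natCast, zpow_one]
  have hp1 : ¬(p : ℤ) ∣ 1 - p * i := by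
    rw [sub_eq_add_neg, ← mul_neg]
    exact not_dvd_one_add (Nat.prime_iff_prime_int.1 Fact.out).not_isUnit (dvd_mul_right _ _)
  exact hgp (K.pow_mem ((zpow_mem_iff_of_not_dvd hG hp1).1 (hzg ▸ hz)) p)

lemma zpow_mem_frattini (hG : IsPGroup p G) {n : ℤ} (hn : (p : ℤ) ∣ n) (g : G) :
    g ^ n ∈ frattini G := by
  obtain ⟨i, rfl⟩ := hn
  rw [zpow_mul, zpow_natCast]
  exact Subgroup.zpow_mem _ (pow_mem_frattini hG g) i

theorem closure_words_eq_top (hG : IsPGroup p G) {a b : G} (hgen : Subgroup.closure {a, b} = ⊤)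
    {r s t : ℤ} (hr : (p : ℤ) ∣ r) (hs : ¬(p : ℤ) ∣ s) (ht : ¬(p : ℤ) ∣ t) (u : ℤ) :
    Subgroup.closure {b ^ r * a ^ s, b ^ t * a ^ u} = ⊤ := by
  set H := Subgroup.closure {b ^ r * a ^ s, b ^ t * a ^ u}
  have hx : b ^ r * a ^ s ∈ H ⊔ frattini G :=
    (le_sup_left : H ≤ _) (Subgroup.subset_closure (by simp))
  have hy : b ^ t * a ^ u ∈ H ⊔ frattini G :=
    (le_sup_left : H ≤ _) (Subgroup.subset_closure (by simp))
  have ha : a ∈ H ⊔ frattini G := by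
    have hbr : b ^ r ∈ H ⊔ frattini G := (le_sup_right : frattini G ≤ _) (zpow_mem_frattini hG hr b)
    exact (zpow_mem_iff_of_not_dvd hG hs).1 ((Subgroup.mul_mem_cancel_left _ hbr).1 hx)
  have hb : b ∈ H ⊔ frattini G :=
    (zpow_mem_iff_of_not_dvd hG ht).1
      ((Subgroup.mul_mem_cancel_right _ (Subgroup.zpow_mem _ ha u)).1 hy)
  refine frattini_nongenerating (eq_top_iff.2 ?_)
  rw [← hgen, Subgroup.closure_le]
  exact Set.insert_subset ha (Set.singleton_subset_iff.2 hb)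

end PGroup

namespace MetacyclicNormalForm

variable {G : Type*} [Group G] {a b : G}

lemma dvd_mul_of_semiconjBy_words {m n k c q r t : ℕ} {s u : ℤ}
    (H : MetacyclicNormalForm m n k c a b)
    (h : SemiconjBy (b ^ t * a ^ u) ((b ^ r * a ^ s) ^ (1 + q)) (b ^ r * a ^ s)) : n ∣ r * q := by
  have hwords := h.eq
  rw [word_pow H.semiconjBy, word_mul_word H.semiconjBy, word_mul_word H.semiconjBy,
    ← zpow_natCast b, ← zpow_natCast b] at hwords
  have hdvd := H.dvd_sub_of_word_eq_word hwords
  rw [← Int.natCast_dvd_natCast]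
  convert hdvd using 1
  push_cast
  ring

variable {p f α β δ : ℕ}

lemma left_word_pow_eq_zpow
    (H : MetacyclicNormalForm (p ^ (f + α + δ)) (p ^ (f + α + β)) (p ^ (f + α)) (1 + p ^ f) a b)
    (hodd : Odd p) (hf : 0 < f) (hδ : δ ≤ f + β) {v : ℕ} (hv : f ≤ v) (k : ℕ) (s : ℤ) :
    (b ^ (p ^ (α + β) * k) * a ^ s) ^ p ^ v = a ^ (p ^ v * (s + p ^ α * k)) := by
  obtain ⟨q, rfl⟩ := Nat.exists_eq_add_of_le hv
  have hc : ((1 + p ^ f : ℕ) : ℤ) ^ (p ^ (α + β) * k) ≡ 1 [ZMOD p ^ (f + (α + β))] := by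
    exact_mod_cast one_add_pow_pow_modEq_one hodd hf (dvd_mul_right _ k)
  rw [H.word_pow_prime_pow hodd (by lia) hc (by lia),
    show p ^ (α + β) * k * p ^ (f + q) = p ^ (f + α + β) * (k * p ^ q) by ring, pow_mul,
    H.pow_right, ← pow_mul, ← zpow_natCast, ← zpow_add]
  push_cast
  ring_nf

lemma right_word_pow_eq_zpow
    (H : MetacyclicNormalForm (p ^ (f + α + δ)) (p ^ (f + α + β)) (p ^ (f + α)) (1 + p ^ f) a b)
    (hodd : Odd p) (hf : 0 < f) (hδ : δ ≤ f + β) (t : ℕ) (u : ℤ) :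
    (b ^ t * a ^ u) ^ p ^ (f + α + β) = a ^ (p ^ (f + α) * (t + u * p ^ β)) := by
  have hc : ((1 + p ^ f : ℕ) : ℤ) ^ t ≡ 1 [ZMOD p ^ f] := by
    exact_mod_cast one_add_pow_pow_modEq_one (v := 0) hodd hf (one_dvd t)
  rw [H.word_pow_prime_pow hodd hf hc (by lia), mul_comm t, pow_mul, H.pow_right, ← pow_mul,
    ← zpow_natCast, ← zpow_add]
  push_cast
  ring_nf

lemma semiconjBy_words_iff
    (H : MetacyclicNormalForm (p ^ (f + α + δ)) (p ^ (f + α + β)) (p ^ (f + α)) (1 + p ^ f) a b)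
    (hodd : Odd p) (hf : 0 < f) (hδ : δ ≤ f + β) (k t : ℕ) (s u : ℤ) :
    SemiconjBy (b ^ t * a ^ u) ((b ^ (p ^ (α + β) * k) * a ^ s) ^ (1 + p ^ f))
        (b ^ (p ^ (α + β) * k) * a ^ s) ↔
      s * (1 + p ^ f) ^ t ≡ s * (1 + p ^ f) + p ^ (f + α) * (k * (1 + u * p ^ β))
        [ZMOD p ^ (f + α + δ)] := by
  have hp0 : p ^ (f + α + β) ≠ 0 := pow_ne_zero _ hodd.pos.ne'
  have hpow : (1 + p ^ f : ℤ) ^ (p ^ (α + β) * k) ≡ 1 + p ^ f * (p ^ (α + β) * k)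
      [ZMOD p ^ (f + α + δ)] := by
    exact_mod_cast (one_add_pow_pow_modEq hodd hf (dvd_mul_right (p ^ (α + β)) k)).of_dvd
      (pow_dvd_pow _ (by lia))
  have hleft : (b ^ t * a ^ u) * (b ^ (p ^ (α + β) * k) * a ^ s) ^ (1 + p ^ f) =
      b ^ (p ^ (α + β) * k + t) *
        a ^ (u * (1 + p ^ f) ^ (p ^ (α + β) * k) + s + p ^ f * (s + p ^ α * k)) := by
    rw [pow_add _ 1, pow_one, ← mul_assoc, word_mul_word H.semiconjBy, mul_assoc,
      H.left_word_pow_eq_zpow hodd hf hδ le_rfl, ← zpow_add, add_comm t]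
    push_cast
    rfl
  have hright : (b ^ (p ^ (α + β) * k) * a ^ s) * (b ^ t * a ^ u) =
      b ^ (p ^ (α + β) * k + t) * a ^ (s * (1 + p ^ f) ^ t + u) := by
    rw [word_mul_word H.semiconjBy]
    push_cast
    rfl
  rw [SemiconjBy, hleft, hright, mul_left_cancel_iff, H.zpow_eq_zpow_iff hp0]
  have hexp : u * (1 + p ^ f) ^ (p ^ (α + β) * k) + s + p ^ f * (s + p ^ α * k) ≡
      s * (1 + p ^ f) + p ^ (f + α) * (k * (1 + u * p ^ β)) + u [ZMOD p ^ (f + α + δ)] := by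
    convert (hpow.mul_left u).add_right (s + p ^ f * (s + p ^ α * k)) using 1 <;> ring
  rw [Nat.cast_pow]
  exact ⟨fun h ↦ (Int.ModEq.add_right_cancel' u (hexp.symm.trans h)).symm,
    fun h ↦ hexp.trans (h.symm.add_right u)⟩

theorem metacyclicRelations_words_iff
    (H : MetacyclicNormalForm (p ^ (f + α + δ)) (p ^ (f + α + β)) (p ^ (f + α)) (1 + p ^ f) a b)
    (hodd : Odd p) (hf : 0 < f) (hδ : δ ≤ f + β) (k t : ℕ) (s u : ℤ) :
    MetacyclicRelations (p ^ (f + α + δ)) (p ^ (f + α + β)) (p ^ (f + α)) (1 + p ^ f)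
        (b ^ (p ^ (α + β) * k) * a ^ s) (b ^ t * a ^ u) ↔
      s * (1 + p ^ f) ^ t ≡ s * (1 + p ^ f) + p ^ (f + α) * (k * (1 + u * p ^ β))
        [ZMOD p ^ (f + α + δ)] ∧
      t + u * p ^ β ≡ s + p ^ α * k [ZMOD p ^ δ] := by
  have hp0 : p ^ (f + α + β) ≠ 0 := pow_ne_zero _ hodd.pos.ne'
  have hpow_left : (b ^ (p ^ (α + β) * k) * a ^ s) ^ p ^ (f + α + δ) = 1 := by
    rw [H.left_word_pow_eq_zpow hodd hf hδ (by lia), H.zpow_eq_one_iff hp0]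
    exact_mod_cast dvd_mul_right _ _
  have hpow_right : (b ^ t * a ^ u) ^ p ^ (f + α + β) =
      (b ^ (p ^ (α + β) * k) * a ^ s) ^ p ^ (f + α) ↔
        t + u * p ^ β ≡ s + p ^ α * k [ZMOD p ^ δ] := by
    rw [H.right_word_pow_eq_zpow hodd hf hδ, H.left_word_pow_eq_zpow hodd hf hδ (by lia),
      H.zpow_eq_zpow_iff hp0, pow_add p _ δ, Nat.cast_mul, Nat.cast_pow, Nat.cast_pow]
    exact Int.ModEq.mul_left_cancel_iff' (pow_ne_zero _ (by exact_mod_cast hodd.pos.ne'))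
  rw [← H.semiconjBy_words_iff hodd hf hδ, ← hpow_right]
  exact ⟨fun h ↦ ⟨h.semiconjBy, h.pow_right⟩, fun h ↦ ⟨hpow_left, h.2, h.1⟩⟩

lemma pow_dvd_of_semiconjBy_words
    (H : MetacyclicNormalForm (p ^ (f + α + δ)) (p ^ (f + α + β)) (p ^ (f + α)) (1 + p ^ f) a b)
    (hp : p ≠ 0) {r t : ℕ} {s u : ℤ}
    (h : SemiconjBy (b ^ t * a ^ u) ((b ^ r * a ^ s) ^ (1 + p ^ f)) (b ^ r * a ^ s)) :
    p ^ (α + β) ∣ r := by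
  have hdvd := H.dvd_mul_of_semiconjBy_words h
  rw [add_assoc, pow_add, mul_comm r] at hdvd
  exact Nat.dvd_of_mul_dvd_mul_left (Nat.pos_of_ne_zero (pow_ne_zero f hp)) hdvd

lemma not_dvd_of_mulAut
    (H : MetacyclicNormalForm (p ^ (f + α + δ)) (p ^ (f + α + β)) (p ^ (f + α)) (1 + p ^ f) a b)
    (hp : p.Prime) (hodd : Odd p) (hf : 0 < f) (hα : 0 < α) (hδ : δ ≤ f + β) {r : ℕ} {s : ℤ}
    (hr : p ^ (α + β) ∣ r) {φ : MulAut G} (hφ : φ a = b ^ r * a ^ s) : ¬(p : ℤ) ∣ s := by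
  rintro ⟨s, rfl⟩
  obtain ⟨k, rfl⟩ := hr
  obtain ⟨α, rfl⟩ := Nat.exists_eq_add_one_of_ne_zero hα.ne'
  have hp0 : p ^ (f + (α + 1) + β) ≠ 0 := pow_ne_zero _ hp.ne_zero
  have hφpow : φ (a ^ p ^ (f + α + δ)) = 1 := by
    rw [map_pow, hφ, H.left_word_pow_eq_zpow hodd hf hδ (by lia), H.zpow_eq_one_iff hp0]
    refine ⟨s + p ^ α * k, ?_⟩
    push_cast
    ring
  rw [EmbeddingLike.map_eq_one_iff, ← zpow_natCast, H.zpow_eq_one_iff hp0, Int.natCast_dvd_natCast,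
    Nat.pow_dvd_pow_iff_le_right hp.one_lt] at hφpow
  lia

lemma metacyclicRelations_pow_mul_words_iff
    (H : MetacyclicNormalForm (p ^ (f + α + δ)) (p ^ (f + α + β)) (p ^ (f + α)) (1 + p ^ f) a b)
    (hp : p.Prime) (hodd : Odd p) (hf : 0 < f) (hα : 0 < α) (hβ : 0 < β) (hδ : δ ≤ f)
    (k m : ℕ) (s u : ℤ) :
    MetacyclicRelations (p ^ (f + α + δ)) (p ^ (f + α + β)) (p ^ (f + α)) (1 + p ^ f)
        (b ^ (p ^ (α + β) * k) * a ^ s) (b ^ (p ^ α * m + 1) * a ^ u) ↔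
      k ≡ m [ZMOD p ^ δ] ∧ s ≡ 1 + u * p ^ β [ZMOD p ^ δ] := by
  have hU : ¬(p : ℤ) ∣ 1 + u * p ^ β := not_dvd_one_add
    (Nat.prime_iff_prime_int.1 hp).not_isUnit ((dvd_pow_self _ hβ.ne').mul_left u)
  have hexp : ((p ^ α * m + 1 : ℕ) : ℤ) + u * p ^ β = 1 + u * p ^ β + p ^ α * m := by
    push_cast
    ring
  rw [H.metacyclicRelations_words_iff hodd hf (by lia), mul_one_add_pow_modEq_iff hodd hf hδ,
    hexp, mul_modEq_and_modEq_iff hp hα hU]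

theorem metacyclicRelations_words_iff_dvd
    (H : MetacyclicNormalForm (p ^ (f + α + δ)) (p ^ (f + α + β)) (p ^ (f + α)) (1 + p ^ f) a b)
    (hp : p.Prime) (hodd : Odd p) (hf : 0 < f) (hα : 0 < α) (hβ : 0 < β) (hδ : δ ≤ f)
    {r t : ℕ} {s u : ℤ} (hs : ¬(p : ℤ) ∣ s) :
    MetacyclicRelations (p ^ (f + α + δ)) (p ^ (f + α + β)) (p ^ (f + α)) (1 + p ^ f)
        (b ^ r * a ^ s) (b ^ (t + 1) * a ^ u) ↔
      (p : ℤ) ^ (α + β) ∣ r ∧ (p : ℤ) ^ δ ∣ s - (1 + u * p ^ β) ∧ (p : ℤ) ^ α ∣ t ∧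
        (p : ℤ) ^ (α + β + δ) ∣ r - t * p ^ β := by
  have hp0 : (p : ℤ) ^ (α + β) ≠ 0 := pow_ne_zero _ (by exact_mod_cast hp.ne_zero)
  have hdvd_iff (k m : ℕ) : (p : ℤ) ^ (α + β + δ) ∣
      (p ^ (α + β) * k : ℕ) - (p ^ α * m : ℕ) * p ^ β ↔ k ≡ m [ZMOD p ^ δ] := by
    have hfactor : ((p ^ (α + β) * k : ℕ) : ℤ) - (p ^ α * m : ℕ) * p ^ β =
        p ^ (α + β) * (k - m) := by
      push_cast
      ring
    rw [hfactor, pow_add _ (α + β), mul_dvd_mul_iff_left hp0, Int.modEq_comm, Int.modEq_iff_dvd]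
  have hs_iff : s ≡ 1 + u * p ^ β [ZMOD p ^ δ] ↔ (p : ℤ) ^ δ ∣ s - (1 + u * p ^ β) := by
    rw [Int.modEq_comm, Int.modEq_iff_dvd]
  constructor
  · intro h
    obtain ⟨k, rfl⟩ := H.pow_dvd_of_semiconjBy_words hp.ne_zero h.semiconjBy
    obtain ⟨m, rfl⟩ : p ^ α ∣ t :=
      pow_dvd_of_mul_one_add_pow_modEq hp hodd hf hs <|
        ((H.metacyclicRelations_words_iff hodd hf (by lia) k (t + 1) s u).1 h).1.of_dvd
          (pow_dvd_pow _ (by lia))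
    rw [H.metacyclicRelations_pow_mul_words_iff hp hodd hf hα hβ hδ] at h
    exact ⟨by simp, hs_iff.1 h.2, by simp, (hdvd_iff k m).2 h.1⟩
  · rintro ⟨hr, hsU, ht, hrt⟩
    obtain ⟨k, rfl⟩ : p ^ (α + β) ∣ r := by exact_mod_cast hr
    obtain ⟨m, rfl⟩ : p ^ α ∣ t := by exact_mod_cast ht
    exact (H.metacyclicRelations_pow_mul_words_iff hp hodd hf hα hβ hδ k m s u).2
      ⟨(hdvd_iff k m).1 hrt, hs_iff.2 hsU⟩

end MetacyclicNormalForm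

namespace M3

variable {p f α β δ : ℕ}

theorem exists_mulAut_words_iff (hp : p.Prime) (hodd : Odd p) (hf : 0 < f) (hα : 0 < α)
    (hβ : 0 < β) (hδ0 : 0 < δ) (hδ : δ ≤ f) (r t : ℕ) (s u : ℤ) :
    (∃ φ : MulAut (M3 p (f + α) (f + α + δ + β) (f + α + δ) f),
        φ (M3a p _ _ _ f) = M3b p _ _ _ f ^ r * M3a p _ _ _ f ^ s ∧
        φ (M3b p _ _ _ f) = M3b p _ _ _ f ^ (t + 1) * M3a p _ _ _ f ^ u) ↔
      (p : ℤ) ^ (α + β) ∣ r ∧ (p : ℤ) ^ δ ∣ s - (1 + u * p ^ β) ∧ (p : ℤ) ^ α ∣ t ∧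
        (p : ℤ) ^ (α + β + δ) ∣ r - t * p ^ β := by
  have := Fact.mk hp
  have hn : f + α + (f + α + δ + β) - (f + α + δ) = f + α + β := by lia
  have H := metacyclicNormalForm (d := f + α) (e := f + α + δ + β) (h := f + α + δ) hodd hf
    (by lia) (by lia)
  rw [hn] at H
  constructor
  · rintro ⟨φ, ha, hb⟩
    have Hφ := H.toMetacyclicRelations.map φ.toMonoidHom
    simp only [MulEquiv.toMonoidHom_eq_coe, MonoidHom.coe_coe, ha, hb] at Hφ
    have hr := H.pow_dvd_of_semiconjBy_words hp.ne_zero Hφ.semiconjBy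
    have hs := H.not_dvd_of_mulAut hp hodd hf hα (by lia) hr ha
    exact (H.metacyclicRelations_words_iff_dvd hp hodd hf hα hβ hδ hs).1 Hφ
  · rintro ⟨hr_dvd, hs_dvd, ht_dvd, hrt_dvd⟩
    have hunit : ¬IsUnit (p : ℤ) := (Nat.prime_iff_prime_int.1 hp).not_isUnit
    have hr : (p : ℤ) ∣ r := (dvd_pow_self _ (by lia)).trans hr_dvd
    have hs : ¬(p : ℤ) ∣ s :=
      mt (dvd_iff_dvd_of_dvd_sub ((dvd_pow_self _ hδ0.ne').trans hs_dvd)).1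
        (not_dvd_one_add hunit ((dvd_pow_self _ hβ.ne').mul_left u))
    have ht : ¬(p : ℤ) ∣ (t + 1 : ℕ) := by
      rw [Nat.cast_add_one, add_comm]
      exact not_dvd_one_add hunit ((dvd_pow_self _ hα.ne').trans ht_dvd)
    have hwords := (H.metacyclicRelations_words_iff_dvd hp hodd hf hα hβ hδ hs).2
      ⟨hr_dvd, hs_dvd, ht_dvd, hrt_dvd⟩
    have := finite (d := f + α) (e := f + α + δ + β) (h := f + α + δ) (f := f) hp.ne_zero
    refine exists_mulAut_of_closure_eq_top hp.ne_zero (by rwa [hn]) ?_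
    exact_mod_cast closure_words_eq_top (isPGroup hp.ne_zero) (closure_generators _ _ _ _ _)
      hr hs ht u

theorem exists_mulAut_zpow_words_iff (hp : p.Prime) (hodd : Odd p) (hf : 0 < f) (hα : 0 < α)
    (hβ : 0 < β) (hδ0 : 0 < δ) (hδ : δ ≤ f) (r s t u : ℤ) :
    (∃ φ : MulAut (M3 p (f + α) (f + α + δ + β) (f + α + δ) f),
        φ (M3a p _ _ _ f) = M3b p _ _ _ f ^ r * M3a p _ _ _ f ^ s ∧
        φ (M3b p _ _ _ f) = M3b p _ _ _ f ^ t * M3a p _ _ _ f ^ u) ↔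
      (p : ℤ) ^ (α + β) ∣ r ∧ (p : ℤ) ^ δ ∣ s - (1 + u * p ^ β) ∧ (p : ℤ) ^ α ∣ t - 1 ∧
        (p : ℤ) ^ (α + β + δ) ∣ r - (t - 1) * p ^ β := by
  obtain ⟨r', hr, hrr'⟩ := exists_pow_eq_zpow (d := f + α) (e := f + α + δ + β) (h := f + α + δ)
    (f := f) hp.ne_zero (by lia) (by lia) r
  obtain ⟨t', ht, htt'⟩ := exists_pow_eq_zpow (d := f + α) (e := f + α + δ + β) (h := f + α + δ)
    (f := f) hp.ne_zero (by lia) (by lia) (t - 1)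
  have hr_dvd {i : ℕ} (hi : i ≤ f + α + δ + β) : (p : ℤ) ^ i ∣ r - r' :=
    (pow_dvd_pow _ hi).trans hrr'
  have ht_dvd {i : ℕ} (hi : i ≤ f + α + δ + β) : (p : ℤ) ^ i ∣ t - 1 - t' :=
    (pow_dvd_pow _ hi).trans htt'
  have hrt_dvd : (p : ℤ) ^ (α + β + δ) ∣ r - (t - 1) * p ^ β - (r' - t' * p ^ β) := by
    rw [sub_sub_sub_comm, ← sub_mul]
    exact dvd_sub (hr_dvd (by lia)) ((ht_dvd (by lia)).mul_right _)
  have ht_succ : M3b p (f + α) (f + α + δ + β) (f + α + δ) f ^ t = M3b p _ _ _ f ^ (t' + 1) := by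
    rw [pow_succ, ht, zpow_sub_one, inv_mul_cancel_right]
  rw [← hr, ht_succ, exists_mulAut_words_iff hp hodd hf hα hβ hδ0 hδ,
    dvd_iff_dvd_of_dvd_sub (hr_dvd (by lia)), dvd_iff_dvd_of_dvd_sub (ht_dvd (by lia)),
    dvd_iff_dvd_of_dvd_sub hrt_dvd]

end M3

/-- For `G = M₃(p,d,e,h,f)` with `h - d ≤ f < d < h < e`, canonical
generators `a, b`, and integers `r, s, t, u`, the assignment `a ↦ bʳaˢ, b ↦ bᵗaᵘ` extends
to an automorphism of `G` iff `r ≡ 0 (mod p^(d+e-h-f))`, `s ≡ 1 + u·p^(e-h) (mod p^(h-d))`,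
`t ≡ 1 (mod p^(d-f))`, and `r ≡ (t-1)·p^(e-h) (mod p^(e-f))`. -/
theorem stmt_15 (p d e h f : ℕ) (hp : p.Prime) (hodd : Odd p)
    (hf : 0 < f) (hhd : h - d ≤ f) (hfd : f < d) (hdh : d < h) (hhe : h < e)
    (r s t u : ℤ) :
    (∃ φ : MulAut (M3 p d e h f),
        φ (M3a p d e h f) = M3b p d e h f ^ r * M3a p d e h f ^ s ∧
        φ (M3b p d e h f) = M3b p d e h f ^ t * M3a p d e h f ^ u) ↔
      ((p : ℤ) ^ (d + e - h - f) ∣ r ∧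
       (p : ℤ) ^ (h - d) ∣ (s - (1 + u * (p : ℤ) ^ (e - h))) ∧
       (p : ℤ) ^ (d - f) ∣ (t - 1) ∧
       (p : ℤ) ^ (e - f) ∣ (r - (t - 1) * (p : ℤ) ^ (e - h))) := by
  obtain ⟨α, rfl⟩ := Nat.exists_eq_add_of_le hfd.le
  obtain ⟨δ, rfl⟩ := Nat.exists_eq_add_of_le hdh.le
  obtain ⟨β, rfl⟩ := Nat.exists_eq_add_of_le hhe.le
  have hr_exp : f + α + (f + α + δ + β) - (f + α + δ) - f = α + β := by lia
  have hrt_exp : f + α + δ + β - f = α + β + δ := by lia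
  rw [hr_exp, hrt_exp, Nat.add_sub_cancel_left, Nat.add_sub_cancel_left, Nat.add_sub_cancel_left]
  exact M3.exists_mulAut_zpow_words_iff hp hodd hf (by lia) (by lia) (by lia) (by lia) r s t u
end
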